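/- arXiv:math/0511401 — 5 statements merged into one kernel-verified Lean document; each statement's English description precedes it below -/
import Mathlib

section
/- Let c satisfy [H1] and [H2], let k ∈ ℂ with Im k ≥ 0, and let u₁ be the Jost solution from +∞ at k. Define w(x,k) = u₁'(x)/(i k u₁(x)) for k ≠ 0 and w(x,0) = 1, and r(x,k) = (1 − w(x,k))/(1 + w(x,k)). Then: (i) |r(x,k)| < 1 for every x ∈ ℝ; (ii) r(·,k) is bounded and Lipschitz on ℝ, satisfies r'(x,k) = −2ik r(x,k) + (i k q(x)/2)(1 + r(x,k))² for a.e. x ∈ ℝ, and r(x,k) → 0 as x → +∞; (iii) if moreover k is real with k ≠ 0, and T(k), R₂(k) are scattering coefficients, i.e., T(k) ≠ 0 and u₁(·,k) = (R₂(k)/T(k)) u₂(·,k) + (1/T(k)) conj(u₂(·,k)) where u₂ is the Jost solution from −∞ at k, then e^{2ikx} r(x,k) → R₂(k) as x → −∞. -/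
open MeasureTheory Filter Topology

noncomputable section

/-- Hypothesis [H1]: `c` is essentially bounded below away from `0` and bounded above. -/
def HypH1 (c : ℝ → ℝ) : Prop :=
  ∃ c₀ > (0 : ℝ), ∃ cM > (0 : ℝ), ∀ᵐ x : ℝ, c₀ < c x ∧ c x ≤ cM

/-- Hypothesis [H1] with explicit constants `c₀`, `cM`. -/
def HypH1c (c : ℝ → ℝ) (c₀ cM : ℝ) : Prop :=
  0 < c₀ ∧ 0 < cM ∧ ∀ᵐ x : ℝ, c₀ < c x ∧ c x ≤ cM

/-- Hypothesis [H2]: `|c(x) - 1| ≤ C ⟨x⟩^{-1-δ}` almost everywhere. -/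
def HypH2 (c : ℝ → ℝ) : Prop :=
  ∃ C > (0 : ℝ), ∃ δ > (0 : ℝ),
    ∀ᵐ x : ℝ, |c x - 1| ≤ C * (1 + x ^ 2) ^ (-(1 + δ) / 2)

/-- `u` is continuously differentiable, its derivative is locally absolutely continuous,
and `u'' + (k²/c²) u = 0` holds almost everywhere (equivalently, the integral formulation
of the second-order equation holds). -/
def SolvesHelmholtz (c : ℝ → ℝ) (k : ℂ) (u : ℝ → ℂ) : Prop :=
  ContDiff ℝ 1 u ∧
  ∀ a b : ℝ, deriv u b = deriv u a + ∫ x in a..b, -(k ^ 2 / ((c x : ℂ) ^ 2)) * u x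

/-- The Jost solution from `+∞` at `k` : `e^{-ikx} u(x) → 1` as `x → +∞`. -/
def IsJostPlus (c : ℝ → ℝ) (k : ℂ) (u : ℝ → ℂ) : Prop :=
  SolvesHelmholtz c k u ∧
  Tendsto (fun x : ℝ => Complex.exp (-(Complex.I * k * (x : ℂ))) * u x) atTop (𝓝 1)

/-- The Jost solution from `-∞` at `k` : `e^{ikx} u(x) → 1` as `x → -∞`. -/
def IsJostMinus (c : ℝ → ℝ) (k : ℂ) (u : ℝ → ℂ) : Prop :=
  SolvesHelmholtz c k u ∧
  Tendsto (fun x : ℝ => Complex.exp (Complex.I * k * (x : ℂ)) * u x) atBot (𝓝 1)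

/-- `q = 1 - 1/c²`. -/
def qfun (c : ℝ → ℝ) (x : ℝ) : ℝ := 1 - 1 / (c x) ^ 2

/-- `Q = 1 - 1/c`. -/
def Qfun (c : ℝ → ℝ) (x : ℝ) : ℝ := 1 - 1 / c x

/-- `w(x,k) = u₁'(x)/(ik u₁(x))` for `k ≠ 0`, and `w(x,0) = 1`. -/
def wJost (k : ℂ) (u : ℝ → ℂ) (x : ℝ) : ℂ :=
  if k = 0 then 1 else deriv u x / (Complex.I * k * u x)

/-- `r(x,k) = (1 - w(x,k))/(1 + w(x,k))`. -/
def rJost (k : ℂ) (u : ℝ → ℂ) (x : ℝ) : ℂ :=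
  (1 - wJost k u x) / (1 + wJost k u x)


namespace RJ

lemma ac_re {f : ℝ → ℂ} {a b : ℝ} (hf : AbsolutelyContinuousOnInterval f a b) :
    AbsolutelyContinuousOnInterval (fun x => (f x).re) a b := by
  rw [absolutelyContinuousOnInterval_iff] at hf ⊢
  intro ε hε
  obtain ⟨δ, hδ, h⟩ := hf ε hε
  refine ⟨δ, hδ, fun E hE hs => lt_of_le_of_lt (Finset.sum_le_sum fun i _ => ?_) (h E hE hs)⟩
  rw [Complex.dist_eq, Real.dist_eq, ← Complex.sub_re]
  exact Complex.abs_re_le_norm _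

lemma ac_mul {f g : ℝ → ℂ} {a b : ℝ} (hf : AbsolutelyContinuousOnInterval f a b)
    (hg : AbsolutelyContinuousOnInterval g a b) :
    AbsolutelyContinuousOnInterval (fun x => f x * g x) a b :=
  hf.smul hg

lemma ac_contDiff {f : ℝ → ℂ} (hf : ContDiff ℝ 1 f) (a b : ℝ) :
    AbsolutelyContinuousOnInterval f a b :=
  hf.contDiffOn.absolutelyContinuousOnInterval

lemma real_mvt {h : ℝ → ℝ} {a b C : ℝ} (hab : a ≤ b)
    (hf : AbsolutelyContinuousOnInterval h a b)
    (hd : ∀ᵐ x, x ∈ Set.Icc a b → deriv h x ≤ C) : h b - h a ≤ C * (b - a) := by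
  rw [← hf.integral_deriv_eq_sub]
  have : ∫ x in a..b, deriv h x ≤ ∫ x in a..b, C := by
    refine intervalIntegral.integral_mono_ae_restrict hab hf.intervalIntegrable_deriv
      (by simp) ?_
    rw [Filter.EventuallyLE, ae_restrict_iff' measurableSet_Icc]
    exact hd
  refine this.trans (le_of_eq ?_)
  simp [mul_comm]

lemma cplx_mvt {f : ℝ → ℂ} {a b C : ℝ} (hab : a ≤ b)
    (hf : AbsolutelyContinuousOnInterval f a b)
    (hd : ∀ᵐ x, x ∈ Set.Icc a b → ∃ f', HasDerivAt f f' x ∧ ‖f'‖ ≤ C) :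
    ‖f b - f a‖ ≤ C * (b - a) := by
  set ζ := (starRingEnd ℂ) (f b - f a) with hζ
  have hac : AbsolutelyContinuousOnInterval (fun x => (ζ * f x).re) a b :=
    ac_re (ac_mul (ac_contDiff contDiff_const a b) hf)
  have h := real_mvt (C := ‖ζ‖ * C) hab hac (by
    filter_upwards [hd] with x hx hxm
    obtain ⟨f', hf', hn⟩ := hx hxm
    have h2 : HasDerivAt (fun x => (ζ * f x).re) (ζ * f').re x :=
      (Complex.reCLM.hasFDerivAt.comp_hasDerivAt x (hf'.const_mul ζ))
    rw [h2.deriv]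
    calc _ ≤ ‖ζ * f'‖ := Complex.re_le_norm _
      _ = ‖ζ‖ * ‖f'‖ := norm_mul _ _
      _ ≤ _ := by gcongr)
  have h3 : (ζ * f b).re - (ζ * f a).re = ‖f b - f a‖ ^ 2 := by
    rw [← Complex.sub_re, ← mul_sub, hζ, mul_comm, Complex.mul_conj, Complex.normSq_eq_norm_sq]
    simp only [Complex.ofReal_re]
  have h4 : ‖ζ‖ = ‖f b - f a‖ := by rw [hζ]; exact Complex.norm_conj _
  rw [h3, h4] at h
  rcases (norm_nonneg (f b - f a)).eq_or_lt with h0 | h0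
  · rcases hab.eq_or_lt with rfl | hlt
    · simp
    · by_contra hc
      rw [← h0] at hc
      push Not at hc
      have hC : C < 0 := by
        by_contra h; push Not at h
        nlinarith
      have : ∀ᵐ x, x ∉ Set.Icc a b := by
        filter_upwards [hd] with x hx hxm
        obtain ⟨f', -, hn⟩ := hx hxm
        linarith [norm_nonneg f']
      have hm : volume (Set.Icc a b) = 0 := by
        exact measure_eq_zero_iff_ae_notMem.2 this
      rw [Real.volume_Icc] at hm
      simp at hm
      linarith
  · have : ‖f b - f a‖ * ‖f b - f a‖ ≤ ‖f b - f a‖ * (C * (b - a)) := by nlinarith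
    exact le_of_mul_le_mul_left this h0

lemma ae_neg {p : ℝ → Prop} (h : ∀ᵐ x, p x) : ∀ᵐ x : ℝ, p (-x) :=
  (Measure.measurePreserving_neg (volume : Measure ℝ)).quasiMeasurePreserving.ae h

lemma h1_neg {c : ℝ → ℝ} (h : HypH1 c) : HypH1 (fun x => c (-x)) := by
  obtain ⟨a, ha, b, hb, h⟩ := h
  exact ⟨a, ha, b, hb, ae_neg h⟩

lemma h2_neg {c : ℝ → ℝ} (h : HypH2 c) : HypH2 (fun x => c (-x)) := by
  obtain ⟨a, ha, b, hb, h⟩ := h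
  refine ⟨a, ha, b, hb, ?_⟩
  filter_upwards [ae_neg h] with x hx
  simpa using hx

lemma bound_c {c : ℝ → ℝ} (h : HypH1 c) :
    ∃ K > (0 : ℝ), ∀ᵐ x, 0 < c x ∧ 1 / (c x) ^ 2 ≤ K := by
  obtain ⟨a, ha, b, hb, h⟩ := h
  refine ⟨1 / a ^ 2, by positivity, ?_⟩
  filter_upwards [h] with x hx
  refine ⟨ha.trans hx.1, ?_⟩
  have := hx.1.le
  gcongr

lemma q_small {c : ℝ → ℝ} (h1 : HypH1 c) (h2 : HypH2 c) {ε : ℝ} (hε : 0 < ε) :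
    ∃ X : ℝ, ∀ᵐ x, X ≤ x → |qfun c x| ≤ ε := by
  obtain ⟨a, ha, b, hb, h1⟩ := h1
  obtain ⟨C, hC, δ, hδ, h2⟩ := h2
  have ht : Tendsto (fun x : ℝ => (1 / a ^ 2 * (b + 1)) * (C * (1 + x ^ 2) ^ (-(1 + δ) / 2)))
      atTop (𝓝 0) := by
    have e1 : Tendsto (fun x : ℝ => 1 + x ^ 2) atTop atTop :=
      tendsto_atTop_add_const_left _ _ (tendsto_pow_atTop two_ne_zero)
    have e2 := (tendsto_rpow_neg_atTop (y := (1 + δ) / 2) (by positivity)).comp e1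
    have e3 := (e2.const_mul C).const_mul (1 / a ^ 2 * (b + 1))
    simp only [mul_zero] at e3
    refine e3.congr fun x => ?_
    simp only [Function.comp]
    rw [neg_div]
  obtain ⟨X, hX⟩ := eventually_atTop.1 (ht.eventually (gt_mem_nhds hε))
  refine ⟨X, ?_⟩
  filter_upwards [h1, h2] with x hx1 hx2 hx
  refine le_trans ?_ (hX x hx).le
  have hc : 0 < c x := ha.trans hx1.1
  have e : qfun c x = 1 / (c x) ^ 2 * (c x + 1) * (c x - 1) := by
    unfold qfun; field_simp; ring
  rw [e, abs_mul, abs_of_pos (by positivity : 0 < 1 / (c x) ^ 2 * (c x + 1))]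
  have := hx1.1.le
  have := hx1.2
  gcongr

section sol
variable {c : ℝ → ℝ} {k : ℂ} {u : ℝ → ℂ}

lemma hasDerivAt_u (hu : SolvesHelmholtz c k u) (x : ℝ) : HasDerivAt u (deriv u x) x :=
  (hu.1.differentiable (by norm_num) x).hasDerivAt

lemma cont_v (hu : SolvesHelmholtz c k u) : Continuous (deriv u) :=
  hu.1.continuous_deriv (by norm_num)

lemma v_lip {K : ℝ} (hK : ∀ᵐ x, 0 < c x ∧ 1 / (c x) ^ 2 ≤ K) (hu : SolvesHelmholtz c k u)
    (a b : ℝ) : ∃ M : NNReal, LipschitzOnWith M (deriv u) (Set.uIcc a b) := by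
  obtain ⟨M, hM⟩ := isCompact_uIcc (a := a) (b := b) |>.exists_bound_of_continuousOn
    hu.1.continuous.continuousOn
  have hM0 : 0 ≤ M := (norm_nonneg _).trans (hM a (by simp))
  refine ⟨Real.toNNReal (‖k‖ ^ 2 * K * M), LipschitzOnWith.of_dist_le_mul fun x hx y hy => ?_⟩
  have hxy : Set.uIcc y x ⊆ Set.uIcc a b := Set.uIcc_subset_uIcc hy hx
  rw [dist_eq_norm, dist_eq_norm, hu.2 y x, add_sub_cancel_left]
  have := intervalIntegral.norm_integral_le_of_norm_le_const_ae (a := y) (b := x)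
    (C := ‖k‖ ^ 2 * K * M) (f := fun x => -(k ^ 2 / ((c x : ℂ) ^ 2)) * u x) (by
      filter_upwards [hK] with t ht htm
      have h1 := hM t (hxy (Set.uIoc_subset_uIcc htm))
      rw [norm_mul, norm_neg, norm_div, norm_pow, norm_pow, Complex.norm_real, Real.norm_eq_abs,
        sq_abs, div_eq_mul_one_div]
      have h2 := ht.2
      have h3 : 0 ≤ K := le_trans (by positivity) h2
      gcongr)
  refine this.trans ?_
  rw [Real.norm_eq_abs]
  gcongr
  exact Real.le_coe_toNNReal _

lemma v_ac {K : ℝ} (hK : ∀ᵐ x, 0 < c x ∧ 1 / (c x) ^ 2 ≤ K) (hu : SolvesHelmholtz c k u)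
    (a b : ℝ) : AbsolutelyContinuousOnInterval (deriv u) a b :=
  (v_lip hK hu a b).choose_spec.absolutelyContinuousOnInterval

lemma v_deriv (hm : Measurable c) {K : ℝ} (hK : ∀ᵐ x, 0 < c x ∧ 1 / (c x) ^ 2 ≤ K)
    (hu : SolvesHelmholtz c k u) :
    ∀ᵐ x : ℝ, HasDerivAt (deriv u) (-(k ^ 2 / ((c x : ℂ) ^ 2)) * u x) x := by
  have hl : LocallyIntegrable (fun x => -(k ^ 2 / ((c x : ℂ) ^ 2)) * u x) volume := by
    rw [MeasureTheory.locallyIntegrable_iff]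
    intro s hs
    have h1 : IntegrableOn u s volume := hu.1.continuous.continuousOn.integrableOn_compact hs
    refine Integrable.bdd_mul (c := ‖k‖ ^ 2 * K) h1 ?_ ?_
    · exact Measurable.aestronglyMeasurable (by fun_prop)
    · refine ae_restrict_of_ae ?_
      filter_upwards [hK] with t ht
      rw [norm_neg, norm_div, norm_pow, norm_pow, Complex.norm_real, Real.norm_eq_abs,
        sq_abs, div_eq_mul_one_div]
      have h2 := ht.2
      gcongr
  filter_upwards [_root_.LocallyIntegrable.ae_hasDerivAt_integral hl] with x hx
  have := (hx 0).const_add (deriv u 0)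
  refine this.congr_of_eventuallyEq (Eventually.of_forall fun y => ?_)
  exact hu.2 0 y

lemma solves_neg (hu : SolvesHelmholtz c k u) :
    SolvesHelmholtz (fun x => c (-x)) k (fun x => u (-x)) := by
  have hd : deriv (fun x => u (-x)) = fun x => - deriv u (-x) := by
    ext x; exact deriv_comp_neg u x
  refine ⟨hu.1.comp contDiff_neg, fun a b => ?_⟩
  rw [hd]
  simp only
  have := intervalIntegral.integral_comp_neg (a := a) (b := b)
    (fun x => -(k ^ 2 / ((c x : ℂ) ^ 2)) * u x)
  rw [this, hu.2 (-b) (-a)]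
  ring
end sol

lemma exists_D {k : ℂ} (hk0 : k ≠ 0) :
    ∃ h > (0 : ℝ), (Complex.exp (-(2 * Complex.I * k * (h : ℂ))) - 1) / (-(2 * Complex.I * k)) ≠ 0 := by
  have hn : 0 < ‖k‖ := norm_pos_iff.2 hk0
  refine ⟨1 / ‖k‖, by positivity, ?_⟩
  refine div_ne_zero ?_ (by simp [hk0])
  intro h
  rw [sub_eq_zero, Complex.exp_eq_one_iff] at h
  obtain ⟨n, hn'⟩ := h
  have h2 := congrArg norm hn'
  have h3 : ‖-(2 * Complex.I * k * ((1 / ‖k‖ : ℝ) : ℂ))‖ = 2 := by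
    rw [norm_neg, norm_mul, norm_mul, norm_mul, Complex.norm_real]
    simp
    field_simp
  rw [h3] at h2
  simp only [norm_mul, Complex.norm_I, Complex.norm_real, Complex.norm_intCast,
    Complex.norm_ofNat, mul_one, Real.norm_eq_abs, abs_of_pos Real.pi_pos] at h2
  have h4 : n ≠ 0 := by
    rintro rfl
    simp at h2
  have h5 : (1 : ℝ) ≤ |(n : ℝ)| := by
    exact_mod_cast Int.one_le_abs h4
  nlinarith [Real.pi_gt_three]

lemma hasDerivAt_expc (z w : ℂ) (x : ℝ) :
    HasDerivAt (fun t : ℝ => Complex.exp (z * (t : ℂ) + w)) (z * Complex.exp (z * (x : ℂ) + w)) x := by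
  have h1 : HasDerivAt (fun t : ℝ => z * (t : ℂ) + w) z x := by
    have := ((Complex.ofRealCLM.hasDerivAt (x := x)).const_mul z).add_const w
    simpa using this
  have := h1.cexp
  rwa [mul_comm] at this

lemma contDiff_expc (z w : ℂ) : ContDiff ℝ 1 (fun t : ℝ => Complex.exp (z * (t : ℂ) + w)) :=
  Complex.contDiff_exp.comp ((contDiff_const.mul Complex.ofRealCLM.contDiff).add contDiff_const)

section asym
variable {c : ℝ → ℝ} {k : ℂ} {u : ℝ → ℂ}

lemma step1 (hm : Measurable c) (h1 : HypH1 c) (hk : 0 ≤ k.im)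
    (hu : SolvesHelmholtz c k u) {x t ε : ℝ} (hxt : x ≤ t)
    (hq : ∀ᵐ s, x ≤ s → |qfun c s| ≤ ε)
    (hb : ∀ s, x ≤ s → ‖Complex.exp (-(Complex.I * k * (s : ℂ))) * u s‖ ≤ 2) :
    ‖Complex.exp (Complex.I * k * (t : ℂ) + -(2 * Complex.I * k * x)) * (deriv u t - Complex.I * k * u t)
      - Complex.exp (Complex.I * k * (x : ℂ) + -(2 * Complex.I * k * x)) * (deriv u x - Complex.I * k * u x)‖
      ≤ (‖k‖ ^ 2 * ε * 2) * (t - x) := by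
  obtain ⟨K, hK0, hK⟩ := bound_c h1
  refine cplx_mvt (f := fun t : ℝ => Complex.exp (Complex.I * k * (t : ℂ) + -(2 * Complex.I * k * x))
    * (deriv u t - Complex.I * k * u t)) hxt ?_ ?_
  · refine ac_mul (ac_contDiff (contDiff_expc _ _) _ _) ?_
    exact (v_ac hK hu _ _).sub (ac_mul (ac_contDiff contDiff_const _ _) (ac_contDiff hu.1 _ _))
  · filter_upwards [v_deriv hm hK hu, hq, hK] with s hs hqs hcs hsm
    refine ⟨_, (hasDerivAt_expc _ _ s).mul (hs.sub ((hasDerivAt_u hu s).const_mul _)), ?_⟩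
    have hc : (c s : ℂ) ≠ 0 := by exact_mod_cast hcs.1.ne'
    have e1 : Complex.exp (Complex.I * k * (s : ℂ) + -(2 * Complex.I * k * x))
        = Complex.exp (2 * Complex.I * k * ((s - x : ℝ) : ℂ)) *
          Complex.exp (-(Complex.I * k * (s : ℂ))) := by
      rw [← Complex.exp_add]; congr 1; push_cast; ring
    have e2 : Complex.I * k * Complex.exp (Complex.I * k * (s : ℂ) + -(2 * Complex.I * k * x)) *
          (deriv u s - Complex.I * k * u s) +
        Complex.exp (Complex.I * k * (s : ℂ) + -(2 * Complex.I * k * x)) *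
          (-(k ^ 2 / (c s : ℂ) ^ 2) * u s - Complex.I * k * deriv u s)
        = k ^ 2 * ((qfun c s : ℝ) : ℂ) * (Complex.exp (2 * Complex.I * k * ((s - x : ℝ) : ℂ)) *
          (Complex.exp (-(Complex.I * k * (s : ℂ))) * u s)) := by
      rw [e1]
      unfold qfun
      push_cast
      linear_combination (-k ^ 2 * Complex.exp (2 * Complex.I * k * (s - x : ℂ)) *
          (Complex.exp (-(Complex.I * k * (s : ℂ))) * u s)) * Complex.I_mul_I
    rw [e2, norm_mul, norm_mul, norm_pow, norm_mul, Complex.norm_real, Real.norm_eq_abs]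
    have e3 : ‖Complex.exp (2 * Complex.I * k * ((s - x : ℝ) : ℂ))‖ ≤ 1 := by
      rw [Complex.norm_exp, Real.exp_le_one_iff]
      have : (2 * Complex.I * k * ((s - x : ℝ) : ℂ)).re = - (2 * k.im * (s - x)) := by
        simp
      rw [this]
      have := hsm.1
      have : 0 ≤ s - x := by linarith
      have : 0 ≤ 2 * k.im * (s - x) := by positivity
      linarith
    have e4 := hb s hsm.1
    have e5 := hqs hsm.1
    have e6 : 0 ≤ ε := (abs_nonneg _).trans e5
    calc _ ≤ ‖k‖ ^ 2 * ε * (1 * 2) := by gcongr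
      _ = _ := by ring

lemma step2 (hm : Measurable c) (h1 : HypH1 c) (hk : 0 ≤ k.im) (hk0 : k ≠ 0)
    (hu : SolvesHelmholtz c k u) {x h ε : ℝ} (hh : 0 < h) (hε : 0 ≤ ε)
    (hq : ∀ᵐ s, x ≤ s → |qfun c s| ≤ ε)
    (hb : ∀ s, x ≤ s → ‖Complex.exp (-(Complex.I * k * (s : ℂ))) * u s‖ ≤ 2) :
    ‖(Complex.exp (-(Complex.I * k * ((x + h : ℝ) : ℂ))) * u (x + h)
      - Complex.exp (-(Complex.I * k * (x : ℂ))) * u x)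
      - (Complex.exp (-(2 * Complex.I * k * (h : ℂ))) - 1) / (-(2 * Complex.I * k)) *
        (Complex.exp (-(Complex.I * k * (x : ℂ))) * (deriv u x - Complex.I * k * u x))‖
      ≤ Real.exp (2 * k.im * h) * (‖k‖ ^ 2 * ε * 2 * h) * h := by
  set N := Complex.exp (-(Complex.I * k * (x : ℂ))) * (deriv u x - Complex.I * k * u x) with hN
  have hd : ∀ t : ℝ, HasDerivAt (fun t : ℝ => Complex.exp (-(Complex.I * k) * (t : ℂ) + 0) * u t -
      (Complex.exp (-(2 * Complex.I * k) * (t : ℂ) + 2 * Complex.I * k * x) - 1) /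
        (-(2 * Complex.I * k)) * N)
      (Complex.exp (-(2 * Complex.I * k * ((t - x : ℝ) : ℂ))) *
      (Complex.exp (Complex.I * k * (t : ℂ) + -(2 * Complex.I * k * x)) * (deriv u t - Complex.I * k * u t)
      - N)) t := by
    intro t
    have := ((hasDerivAt_expc (-(Complex.I * k)) 0 t).mul (hasDerivAt_u hu t)).sub
      ((((hasDerivAt_expc (-(2 * Complex.I * k)) (2 * Complex.I * k * x) t).sub_const 1).div_const
        (-(2 * Complex.I * k))).mul_const N)
    refine this.congr_deriv ?_
    have e0 : -(2 * Complex.I * k) ≠ 0 := by simp [hk0]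
    rw [mul_div_cancel_left₀ _ e0]
    have e1 : Complex.exp (-(Complex.I * k) * (t : ℂ) + 0)
        = Complex.exp (-(2 * Complex.I * k * ((t - x : ℝ) : ℂ))) *
          Complex.exp (Complex.I * k * (t : ℂ) + -(2 * Complex.I * k * x)) := by
      rw [← Complex.exp_add]; congr 1; push_cast; ring
    have e2 : -(2 * Complex.I * k) * (t : ℂ) + 2 * Complex.I * k * x =
        -(2 * Complex.I * k * ((t - x : ℝ) : ℂ)) := by push_cast; ring
    rw [e1, e2]
    ring
  have key := norm_image_sub_le_of_norm_deriv_le_segment' (a := x) (b := x + h)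
    (C := Real.exp (2 * k.im * h) * (‖k‖ ^ 2 * ε * 2 * h))
    (fun t _ => (hd t).hasDerivWithinAt) (by
      intro t ht
      have s1 := step1 hm h1 hk hu ht.1 hq hb
      have e3 : Complex.exp (Complex.I * k * (x : ℂ) + -(2 * Complex.I * k * x)) *
          (deriv u x - Complex.I * k * u x) = N := by
        rw [hN]; congr 2; ring
      rw [e3] at s1
      rw [norm_mul]
      have e4 : ‖Complex.exp (-(2 * Complex.I * k * ((t - x : ℝ) : ℂ)))‖ ≤ Real.exp (2 * k.im * h) := by
        rw [Complex.norm_exp, Real.exp_le_exp]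
        have : (-(2 * Complex.I * k * ((t - x : ℝ) : ℂ))).re = 2 * k.im * (t - x) := by
          simp
        rw [this]
        have := ht.2
        gcongr
        linarith
      have e5 : t - x ≤ h := by linarith [ht.2]
      gcongr
      refine s1.trans ?_
      gcongr) (x + h) ⟨by linarith, le_refl _⟩
  have e7 : x + h - x = h := by ring
  rw [e7] at key
  refine le_trans (le_of_eq ?_) key
  congr 1
  have a1 : -(Complex.I * k) * ((x + h : ℝ) : ℂ) + 0 = -(Complex.I * k * ((x + h : ℝ) : ℂ)) := by ring
  have a2 : -(Complex.I * k) * (x : ℂ) + 0 = -(Complex.I * k * (x : ℂ)) := by ring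
  have a3 : -(2 * Complex.I * k) * ((x + h : ℝ) : ℂ) + 2 * Complex.I * k * x =
    -(2 * Complex.I * k * (h : ℂ)) := by push_cast; ring
  have a4 : -(2 * Complex.I * k) * (x : ℂ) + 2 * Complex.I * k * x = 0 := by ring
  rw [a1, a2, a3, a4, Complex.exp_zero]
  ring

lemma jost_n (hm : Measurable c) (h1 : HypH1 c) (h2 : HypH2 c) (hk : 0 ≤ k.im) (hk0 : k ≠ 0)
    (hu : IsJostPlus c k u) :
    Tendsto (fun x : ℝ => Complex.exp (-(Complex.I * k * (x : ℂ))) *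
      (deriv u x - Complex.I * k * u x)) atTop (𝓝 0) := by
  obtain ⟨h, hh, hD⟩ := exists_D hk0
  set D := (Complex.exp (-(2 * Complex.I * k * (h : ℂ))) - 1) / (-(2 * Complex.I * k)) with hDdef
  have hD' : 0 < ‖D‖ := norm_pos_iff.2 hD
  have hmt := hu.2
  have hdiff : Tendsto (fun x : ℝ => Complex.exp (-(Complex.I * k * ((x + h : ℝ) : ℂ))) * u (x + h)
      - Complex.exp (-(Complex.I * k * (x : ℂ))) * u x) atTop (𝓝 0) := by
    have := (hmt.comp (tendsto_atTop_add_const_right _ h tendsto_id)).sub hmt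
    simpa using this
  rw [Metric.tendsto_atTop]
  intro η hη
  set B := Real.exp (2 * k.im * h) * (‖k‖ ^ 2 * 2 * h) * h with hB
  have hBpos : 0 < B := by
    have : 0 < ‖k‖ := norm_pos_iff.2 hk0
    positivity
  set ε := η * ‖D‖ / 2 / B with hεd
  have hε : 0 < ε := by positivity
  obtain ⟨X1, hX1⟩ := q_small h1 h2 hε
  have hmb : ∀ᶠ x : ℝ in atTop, ‖Complex.exp (-(Complex.I * k * (x : ℂ))) * u x‖ < 2 :=
    hmt.norm.eventually (gt_mem_nhds (by simp))
  obtain ⟨X2, hX2⟩ := eventually_atTop.1 hmb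
  obtain ⟨X3, hX3⟩ := Metric.tendsto_atTop.1 hdiff (η * ‖D‖ / 2) (by positivity)
  refine ⟨max X1 (max X2 X3), fun x hx => ?_⟩
  have hx1 : X1 ≤ x := (le_max_left _ _).trans hx
  have hx2 : X2 ≤ x := (le_max_left _ _).trans ((le_max_right _ _).trans hx)
  have hx3 : X3 ≤ x := (le_max_right _ _).trans ((le_max_right _ _).trans hx)
  have s := step2 hm h1 hk hk0 hu.1 (x := x) hh hε.le
    (by filter_upwards [hX1] with s hs hxs using hs (hx1.trans hxs))
    (fun s hs => (hX2 s (hx2.trans hs)).le)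
  rw [← hDdef] at s
  have s3 := hX3 x hx3
  rw [dist_zero_right] at s3 ⊢
  set N := Complex.exp (-(Complex.I * k * (x : ℂ))) * (deriv u x - Complex.I * k * u x)
  have hBe : Real.exp (2 * k.im * h) * (‖k‖ ^ 2 * ε * 2 * h) * h = η * ‖D‖ / 2 := by
    have : Real.exp (2 * k.im * h) * (‖k‖ ^ 2 * ε * 2 * h) * h = ε * B := by rw [hB]; ring
    rw [this, hεd]; field_simp
  rw [hBe] at s
  rw [norm_sub_rev] at s
  have s4 : ‖D‖ * ‖N‖ < ‖D‖ * η := by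
    rw [← norm_mul]
    have := norm_le_norm_add_norm_sub'
      (D * N) (Complex.exp (-(Complex.I * k * ((x + h : ℝ) : ℂ))) * u (x + h)
      - Complex.exp (-(Complex.I * k * (x : ℂ))) * u x)
    linarith
  exact lt_of_mul_lt_mul_left s4 hD'.le

end asym

section pos
variable {c : ℝ → ℝ} {k : ℂ} {u : ℝ → ℂ}

lemma F_anti (hm : Measurable c) (h1 : HypH1 c) (hk : 0 ≤ k.im) (hk0 : k ≠ 0)
    (hu : SolvesHelmholtz c k u) {x y : ℝ} (hxy : x ≤ y) :
    (deriv u y * (starRingEnd ℂ) (u y) * (1 / (Complex.I * k))).re ≤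
      (deriv u x * (starRingEnd ℂ) (u x) * (1 / (Complex.I * k))).re := by
  obtain ⟨K, hK0, hK⟩ := bound_c h1
  have hcu : ContDiff ℝ 1 (fun x => (starRingEnd ℂ) (u x)) := Complex.conjCLE.contDiff.comp hu.1
  have h := real_mvt (C := 0) hxy
    (h := fun x => (deriv u x * (starRingEnd ℂ) (u x) * (1 / (Complex.I * k))).re)
    (ac_re (ac_mul (ac_mul (v_ac hK hu _ _) (ac_contDiff hcu _ _)) (ac_contDiff contDiff_const _ _))) (by
      filter_upwards [v_deriv hm hK hu, hK] with s hs hcs _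
      have hconj : HasDerivAt (fun x => (starRingEnd ℂ) (u x)) ((starRingEnd ℂ) (deriv u s)) s :=
        (Complex.conjCLE.toContinuousLinearMap.hasFDerivAt.comp_hasDerivAt s (hasDerivAt_u hu s))
      have hd : HasDerivAt (fun x => (deriv u x * (starRingEnd ℂ) (u x) * (1 / (Complex.I * k))).re) _ s :=
        (Complex.reCLM.hasFDerivAt.comp_hasDerivAt s ((hs.mul hconj).mul_const (1 / (Complex.I * k))))
      rw [hd.deriv]
      have hc := hcs.1
      have hcC : (c s : ℂ) ≠ 0 := by exact_mod_cast hc.ne'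
      have e : (-(k ^ 2 / (c s : ℂ) ^ 2) * u s * (starRingEnd ℂ) (u s) +
          deriv u s * (starRingEnd ℂ) (deriv u s)) * (1 / (Complex.I * k)) =
          (Complex.I * k) * ((Complex.normSq (u s) / (c s) ^ 2 : ℝ) : ℂ) +
          (Complex.I * k)⁻¹ * ((Complex.normSq (deriv u s) : ℝ) : ℂ) := by
        rw [mul_assoc, Complex.mul_conj, Complex.mul_conj]
        have := Complex.I_ne_zero
        push_cast
        field_simp
        linear_combination (-(k ^ 2 * (Complex.normSq (u s) : ℂ))) * Complex.I_sq
      simp only [Complex.reCLM_apply]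
      rw [e, Complex.add_re, Complex.re_mul_ofReal, Complex.re_mul_ofReal, Complex.inv_re]
      have e1 : (Complex.I * k).re = - k.im := by simp
      rw [e1]
      have p1 : 0 ≤ k.im * (Complex.normSq (u s) / (c s) ^ 2) :=
        mul_nonneg hk (div_nonneg (Complex.normSq_nonneg _) (by positivity))
      have p2 : 0 ≤ k.im / Complex.normSq (Complex.I * k) * Complex.normSq (deriv u s) :=
        mul_nonneg (div_nonneg hk (Complex.normSq_nonneg _)) (Complex.normSq_nonneg _)
      rw [neg_div]
      linarith)
  simp only [zero_mul] at h
  linarith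

lemma F_pos (hm : Measurable c) (h1 : HypH1 c) (h2 : HypH2 c) (hk : 0 ≤ k.im) (hk0 : k ≠ 0)
    (hu : IsJostPlus c k u) (x : ℝ) :
    0 < (deriv u x * (starRingEnd ℂ) (u x) * (1 / (Complex.I * k))).re := by
  have hn := jost_n hm h1 h2 hk hk0 hu
  have hmt := hu.2
  have hI : Complex.I * k ≠ 0 := mul_ne_zero Complex.I_ne_zero hk0
  have hconj : Tendsto (fun x : ℝ => (starRingEnd ℂ)
      (Complex.exp (-(Complex.I * k * (x : ℂ))) * u x)) atTop (𝓝 1) := by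
    have := (Complex.continuous_conj.tendsto 1).comp hmt
    rw [map_one] at this
    exact this
  have ht := (((hn.add (hmt.const_mul (Complex.I * k))).mul hconj).mul_const (1 / (Complex.I * k)))
  have e : (0 + Complex.I * k * 1) * 1 * (1 / (Complex.I * k)) = 1 := by field_simp; ring
  rw [e] at ht
  have hre := (Complex.continuous_re.tendsto 1).comp ht
  have hev := hre.eventually (lt_mem_nhds (show (0 : ℝ) < Complex.re 1 by simp))
  obtain ⟨y, hy, hxy⟩ := (hev.and (eventually_ge_atTop x)).exists
  refine lt_of_lt_of_le ?_ (F_anti hm h1 hk hk0 hu.1 hxy)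
  simp only [Function.comp] at hy
  set E := Complex.exp (-(Complex.I * k * (y : ℂ)))
  have e2 : (E * (deriv u y - Complex.I * k * u y) + Complex.I * k * (E * u y)) *
      (starRingEnd ℂ) (E * u y) * (1 / (Complex.I * k)) =
      (deriv u y * (starRingEnd ℂ) (u y) * (1 / (Complex.I * k))) * ((Complex.normSq E : ℝ) : ℂ) := by
    rw [← Complex.mul_conj, map_mul]; ring
  rw [e2, Complex.re_mul_ofReal] at hy
  exact pos_of_mul_pos_left hy (Complex.normSq_nonneg _)

lemma u_ne (hm : Measurable c) (h1 : HypH1 c) (h2 : HypH2 c) (hk : 0 ≤ k.im) (hk0 : k ≠ 0)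
    (hu : IsJostPlus c k u) (x : ℝ) : u x ≠ 0 := by
  intro h
  have := F_pos hm h1 h2 hk hk0 hu x
  simp [h] at this

lemma w_pos (hm : Measurable c) (h1 : HypH1 c) (h2 : HypH2 c) (hk : 0 ≤ k.im) (hk0 : k ≠ 0)
    (hu : IsJostPlus c k u) (x : ℝ) : 0 < (wJost k u x).re := by
  have hF := F_pos hm h1 h2 hk hk0 hu x
  have h0 := u_ne hm h1 h2 hk hk0 hu x
  have e : wJost k u x * ((Complex.normSq (u x) : ℝ) : ℂ) =
      deriv u x * (starRingEnd ℂ) (u x) * (1 / (Complex.I * k)) := by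
    rw [← Complex.mul_conj, wJost, if_neg hk0]
    have := Complex.I_ne_zero
    field_simp
  rw [← e, Complex.re_mul_ofReal] at hF
  exact pos_of_mul_pos_left hF (Complex.normSq_nonneg _)

lemma one_add_w_ne {x : ℝ} (hw : 0 < (wJost k u x).re) : 1 + wJost k u x ≠ 0 := by
  intro h
  have := congrArg Complex.re h
  simp at this
  linarith

lemma norm_r_lt {x : ℝ} (hw : 0 < (wJost k u x).re) : ‖rJost k u x‖ < 1 := by
  have h0 := one_add_w_ne hw
  rw [rJost, norm_div, div_lt_one (norm_pos_iff.2 h0)]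
  have : ‖1 - wJost k u x‖ ^ 2 < ‖1 + wJost k u x‖ ^ 2 := by
    rw [← Complex.normSq_eq_norm_sq, ← Complex.normSq_eq_norm_sq, Complex.normSq_apply,
      Complex.normSq_apply]
    simp
    nlinarith
  exact lt_of_pow_lt_pow_left₀ 2 (norm_nonneg _) this

lemma s_ne (hk0 : k ≠ 0) {x : ℝ} (h0 : u x ≠ 0) (hw : 0 < (wJost k u x).re) :
    Complex.I * k * u x + deriv u x ≠ 0 := by
  have h := one_add_w_ne hw
  rw [wJost, if_neg hk0] at h
  have := Complex.I_ne_zero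
  intro h'
  apply h
  field_simp
  rw [h', mul_zero]

lemma r_eq (hk0 : k ≠ 0) {x : ℝ} (h0 : u x ≠ 0) (hw : 0 < (wJost k u x).re) :
    rJost k u x = (Complex.I * k * u x - deriv u x) / (Complex.I * k * u x + deriv u x) := by
  have hs := s_ne hk0 h0 hw
  have h := one_add_w_ne hw
  rw [rJost]
  rw [div_eq_div_iff h hs]
  rw [wJost, if_neg hk0]
  have := Complex.I_ne_zero
  field_simp

lemma inv_ac {s : ℝ → ℂ} {a b : ℝ} {M : NNReal} (hs : LipschitzOnWith M s (Set.uIcc a b))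
    (h0 : ∀ x, s x ≠ 0) : AbsolutelyContinuousOnInterval (fun x => (s x)⁻¹) a b := by
  have hc : ContinuousOn (fun x => (s x)⁻¹) (Set.uIcc a b) :=
    hs.continuousOn.inv₀ fun x _ => h0 x
  obtain ⟨C, hC⟩ := isCompact_uIcc.exists_bound_of_continuousOn hc
  have hC0 : 0 ≤ C := (norm_nonneg _).trans (hC a (by simp))
  have : LipschitzOnWith (Real.toNNReal (C * C * M)) (fun x => (s x)⁻¹) (Set.uIcc a b) := by
    refine LipschitzOnWith.of_dist_le_mul fun x hx y hy => ?_
    rw [dist_inv_inv₀ (h0 x) (h0 y), Real.coe_toNNReal _ (by positivity)]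
    have h1 := hs.dist_le_mul x hx y hy
    have h2 := hC x hx
    have h3 := hC y hy
    rw [norm_inv] at h2 h3
    rw [div_eq_mul_inv, mul_inv]
    calc _ ≤ (M * dist x y) * (C * C) := by gcongr
      _ = _ := by ring
  exact this.absolutelyContinuousOnInterval

lemma r_ac (h1 : HypH1 c) (hk0 : k ≠ 0) (hu : SolvesHelmholtz c k u) (h0 : ∀ x, u x ≠ 0)
    (hw : ∀ x, 0 < (wJost k u x).re) (a b : ℝ) :
    AbsolutelyContinuousOnInterval (rJost k u) a b := by
  obtain ⟨K, hK0, hK⟩ := bound_c h1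
  have e : rJost k u = fun x => (Complex.I * k * u x - deriv u x) *
      (Complex.I * k * u x + deriv u x)⁻¹ := by
    ext x; rw [r_eq hk0 (h0 x) (hw x), div_eq_mul_inv]
  have hcd : ContDiff ℝ 1 (fun x => Complex.I * k * u x) := contDiff_const.mul hu.1
  obtain ⟨M1, hM1⟩ := v_lip hK hu a b
  obtain ⟨M2, hM2⟩ := (hcd.contDiffOn (s := Set.uIcc a b)).exists_lipschitzOnWith (by decide)
    (convex_uIcc _ _) isCompact_uIcc
  rw [e]
  refine ac_mul ?_ ?_
  · exact (ac_contDiff hcd _ _).sub (v_ac hK hu _ _)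
  · exact inv_ac (hM2.add hM1) fun x => s_ne hk0 (h0 x) (hw x)

lemma r_deriv (hm : Measurable c) (h1 : HypH1 c) (hk0 : k ≠ 0) (hu : SolvesHelmholtz c k u)
    (h0 : ∀ x, u x ≠ 0) (hw : ∀ x, 0 < (wJost k u x).re) :
    ∀ᵐ x : ℝ, HasDerivAt (rJost k u)
      (-(2 * Complex.I * k) * rJost k u x +
        (Complex.I * k * ((qfun c x : ℝ) : ℂ) / 2) * (1 + rJost k u x) ^ 2) x := by
  obtain ⟨K, hK0, hK⟩ := bound_c h1
  have e : rJost k u = fun x => (Complex.I * k * u x - deriv u x) /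
      (Complex.I * k * u x + deriv u x) := by
    ext x; rw [r_eq hk0 (h0 x) (hw x)]
  filter_upwards [v_deriv hm hK hu, hK] with x hx hc
  have hs := s_ne hk0 (h0 x) (hw x)
  have hiku := (hasDerivAt_u hu x).const_mul (Complex.I * k)
  rw [e]
  refine ((hiku.sub hx).div (hiku.add hx) hs).congr_deriv ?_
  have hcC : (c x : ℂ) ≠ 0 := by exact_mod_cast hc.1.ne'
  simp only [qfun, Pi.sub_apply, Pi.add_apply]
  push_cast
  set U := u x
  set V := deriv u x
  have hI := Complex.I_sq
  have e2 : 1 + (Complex.I * k * U - V) / (Complex.I * k * U + V) =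
    2 * Complex.I * k * U / (Complex.I * k * U + V) := by
    field_simp; ring
  rw [e2]
  have e3 : k ^ 2 / (c x : ℂ) ^ 2 = k ^ 2 * (1 / (c x : ℂ) ^ 2) := by ring
  rw [e3]
  set κ := 1 / (c x : ℂ) ^ 2
  rw [div_pow, eq_comm, mul_div_assoc', mul_div_assoc', div_add_div _ _ hs (pow_ne_zero 2 hs),
    div_eq_div_iff (mul_ne_zero hs (pow_ne_zero 2 hs)) (pow_ne_zero 2 hs)]
  linear_combination (Complex.I * k * U + V) ^ 3 * (-2 * Complex.I * k ^ 3 * U ^ 2 * κ) * hI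

lemma r_lip (hm : Measurable c) (h1 : HypH1 c) (hk0 : k ≠ 0) (hu : SolvesHelmholtz c k u)
    (h0 : ∀ x, u x ≠ 0) (hw : ∀ x, 0 < (wJost k u x).re) :
    ∃ L : NNReal, LipschitzWith L (rJost k u) := by
  obtain ⟨K, hK0, hK⟩ := bound_c h1
  set L := 2 * ‖k‖ + ‖k‖ * (1 + K) / 2 * 2 ^ 2 with hL
  have hL0 : 0 ≤ L := by positivity
  have key : ∀ a b, a ≤ b → ‖rJost k u b - rJost k u a‖ ≤ L * (b - a) := by
    intro a b hab
    refine cplx_mvt hab (r_ac h1 hk0 hu h0 hw a b) ?_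
    filter_upwards [r_deriv hm h1 hk0 hu h0 hw, hK] with x hx hc _
    refine ⟨_, hx, (norm_add_le _ _).trans ?_⟩
    have hr := (norm_r_lt (hw x)).le
    have hr2 : ‖1 + rJost k u x‖ ≤ 2 := by
      refine (norm_add_le _ _).trans ?_
      rw [norm_one]; linarith
    have hq : |qfun c x| ≤ 1 + K := by
      have : 0 < 1 / (c x) ^ 2 := by have := hc.1; positivity
      unfold qfun
      rw [abs_le]; constructor <;> linarith [hc.2]
    rw [hL]
    simp only [norm_mul, norm_neg, norm_div, norm_pow, Complex.norm_I, Complex.norm_real,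
      Complex.norm_ofNat, mul_one, one_mul, Real.norm_eq_abs]
    have : 2 * ‖k‖ * ‖rJost k u x‖ ≤ 2 * ‖k‖ * 1 := by gcongr
    rw [mul_one] at this
    gcongr
  refine ⟨⟨L, hL0⟩, LipschitzWith.of_dist_le_mul fun x y => ?_⟩
  rw [Complex.dist_eq, Real.dist_eq]
  change _ ≤ L * _
  rcases le_total x y with h | h
  · rw [norm_sub_rev, abs_sub_comm, abs_of_nonneg (by linarith)]
    exact key x y h
  · rw [abs_of_nonneg (by linarith)]
    exact key y x h

lemma r_top (hm : Measurable c) (h1 : HypH1 c) (h2 : HypH2 c) (hk : 0 ≤ k.im) (hk0 : k ≠ 0)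
    (hu : IsJostPlus c k u)
    (h0 : ∀ x, u x ≠ 0) (hw : ∀ x, 0 < (wJost k u x).re) :
    Tendsto (rJost k u) atTop (𝓝 0) := by
  have hn := jost_n hm h1 h2 hk hk0 hu
  have hmt := hu.2
  have hI : 2 * (Complex.I * k) ≠ 0 := by simp [hk0]
  have ht := hn.neg.div (hn.add (hmt.const_mul (2 * (Complex.I * k)))) (by simpa using hk0)
  simp only [neg_zero, zero_div] at ht
  refine ht.congr fun x => ?_
  rw [r_eq hk0 (h0 x) (hw x)]
  simp only [Pi.div_apply]
  have hE := Complex.exp_ne_zero (-(Complex.I * k * (x : ℂ)))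
  rw [eq_comm, ← mul_div_mul_left _ _ hE]
  congr 1 <;> ring

lemma r_bot {kr : ℝ} (hm : Measurable c) (h1 : HypH1 c) (h2 : HypH2 c) (hkr : k = (kr : ℂ)) (hk0 : k ≠ 0)
    (h0 : ∀ x, u x ≠ 0) (hw : ∀ x, 0 < (wJost k u x).re) {T R₂ : ℂ} {u₂ : ℝ → ℂ} (hT : T ≠ 0)
    (hu₂ : IsJostMinus c k u₂)
    (hrel : ∀ x : ℝ, u x = (R₂ / T) * u₂ x + (1 / T) * (starRingEnd ℂ) (u₂ x)) :
    Tendsto (fun x : ℝ => Complex.exp (2 * Complex.I * k * (x : ℂ)) * rJost k u x)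
          atBot (𝓝 R₂) := by
  have hk : 0 ≤ k.im := by rw [hkr]; simp
  have hP := hu₂.2
  have hplus : IsJostPlus (fun x => c (-x)) k (fun x => u₂ (-x)) := by
    refine ⟨solves_neg hu₂.1, ?_⟩
    refine (hP.comp tendsto_neg_atTop_atBot).congr fun x => ?_
    simp only [Function.comp]
    push_cast
    ring_nf
  have hn := (jost_n (hm.comp measurable_neg) (h1_neg h1) (h2_neg h2) hk hk0 hplus).neg.comp
    tendsto_neg_atBot_atTop
  have hN : Tendsto (fun x : ℝ => Complex.exp (Complex.I * k * (x : ℂ)) *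
      (deriv u₂ x + Complex.I * k * u₂ x)) atBot (𝓝 0) := by
    rw [neg_zero] at hn
    refine hn.congr fun x => ?_
    simp only [Function.comp]
    rw [deriv_comp_neg u₂ (-x)]
    simp only [neg_neg]
    push_cast
    rw [mul_neg, neg_neg]
    ring
  have hck : (starRingEnd ℂ) k = k := by rw [hkr]; exact Complex.conj_ofReal _
  have hPc : Tendsto (fun x : ℝ => Complex.exp (-(Complex.I * k * (x : ℂ))) *
      (starRingEnd ℂ) (u₂ x)) atBot (𝓝 1) := by
    have := (Complex.continuous_conj.tendsto 1).comp hP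
    rw [map_one] at this
    refine this.congr fun x => ?_
    simp only [Function.comp, map_mul, ← Complex.exp_conj, hck, Complex.conj_I, Complex.conj_ofReal]
    ring_nf
  have hNc : Tendsto (fun x : ℝ => Complex.exp (-(Complex.I * k * (x : ℂ))) *
      ((starRingEnd ℂ) (deriv u₂ x) - Complex.I * k * (starRingEnd ℂ) (u₂ x))) atBot (𝓝 0) := by
    have := (Complex.continuous_conj.tendsto 0).comp hN
    rw [map_zero] at this
    refine this.congr fun x => ?_
    simp only [Function.comp, map_mul, map_add, ← Complex.exp_conj, hck, Complex.conj_I,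
      Complex.conj_ofReal]
    ring_nf
  have hrot : ∀ (σ : ℝ) (g : ℝ → ℂ), Tendsto g atBot (𝓝 0) →
      Tendsto (fun x : ℝ => Complex.exp (σ * (Complex.I * k * (x : ℂ))) * g x) atBot (𝓝 0) := by
    intro σ g hg
    rw [tendsto_zero_iff_norm_tendsto_zero] at hg ⊢
    refine hg.congr fun x => ?_
    rw [norm_mul, Complex.norm_exp, hkr]
    simp
  have hdu : ∀ x, deriv u x = (R₂ / T) * deriv u₂ x + (1 / T) * (starRingEnd ℂ) (deriv u₂ x) := by
    intro x
    have hconj : HasDerivAt (fun x => (starRingEnd ℂ) (u₂ x)) ((starRingEnd ℂ) (deriv u₂ x)) x :=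
      (Complex.conjCLE.toContinuousLinearMap.hasFDerivAt.comp_hasDerivAt x (hasDerivAt_u hu₂.1 x))
    have := ((hasDerivAt_u hu₂.1 x).const_mul (R₂ / T)).add (hconj.const_mul (1 / T))
    rw [funext hrel]
    exact this.deriv
  have hnum := (((hP.const_mul (2 * (Complex.I * k))).sub hN).const_mul (R₂ / T)).sub
    ((hrot 2 _ hNc).const_mul (1 / T))
  have hden := ((hrot (-2) _ hN).const_mul (R₂ / T)).add
    (((hPc.const_mul (2 * (Complex.I * k))).add hNc).const_mul (1 / T))
  have hI := Complex.I_ne_zero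
  have ht := hnum.div hden (by simp [hk0, hT])
  have e : (R₂ / T * (2 * (Complex.I * k) * 1 - 0) - 1 / T * 0) /
      (R₂ / T * 0 + 1 / T * (2 * (Complex.I * k) * 1 + 0)) = R₂ := by
    simp only [mul_zero, sub_zero, mul_one, zero_add, add_zero]
    field_simp
  rw [e] at ht
  refine ht.congr fun x => ?_
  rw [r_eq hk0 (h0 x) (hw x), hdu x, hrel x]
  simp only [Pi.div_apply]
  set E := Complex.exp (Complex.I * k * (x : ℂ)) with hE
  have hE0 : E ≠ 0 := Complex.exp_ne_zero _
  have e1 : Complex.exp (-(Complex.I * k * (x : ℂ))) = E⁻¹ := by rw [Complex.exp_neg]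
  have e2 : Complex.exp (((2 : ℝ) : ℂ) * (Complex.I * k * (x : ℂ))) = E ^ 2 := by
    rw [hE, ← Complex.exp_nat_mul]; simp
  have e3 : Complex.exp (((-2 : ℝ) : ℂ) * (Complex.I * k * (x : ℂ))) = (E ^ 2)⁻¹ := by
    rw [← e2, ← Complex.exp_neg]; congr 1; push_cast; ring
  have e4 : Complex.exp (2 * Complex.I * k * (x : ℂ)) = E ^ 2 := by
    rw [← e2]; congr 1; push_cast; ring
  rw [e1, e2, e3, e4, mul_div_assoc', eq_comm, ← mul_div_mul_left _ _ (inv_ne_zero hE0)]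
  congr 1
  · field_simp; ring
  · field_simp; ring

end pos

end RJ
/-- Basic properties of `r(·,k)`. -/
theorem r_properties (c : ℝ → ℝ) (hmeas : Measurable c)
    (h1 : HypH1 c) (h2 : HypH2 c) (k : ℂ) (hk : 0 ≤ k.im)
    (u₁ : ℝ → ℂ) (hu : IsJostPlus c k u₁) :
    (∀ x : ℝ, ‖rJost k u₁ x‖ < 1) ∧
    (∃ M : ℝ, ∀ x : ℝ, ‖rJost k u₁ x‖ ≤ M) ∧
    (∃ L : NNReal, LipschitzWith L (rJost k u₁)) ∧
    (∀ᵐ x : ℝ, HasDerivAt (rJost k u₁)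
      (-(2 * Complex.I * k) * rJost k u₁ x +
        (Complex.I * k * ((qfun c x : ℝ) : ℂ) / 2) * (1 + rJost k u₁ x) ^ 2) x) ∧
    Tendsto (rJost k u₁) atTop (𝓝 0) ∧
    (∀ kr : ℝ, k = (kr : ℂ) → kr ≠ 0 →
      ∀ (T R₂ : ℂ) (u₂ : ℝ → ℂ), T ≠ 0 → IsJostMinus c k u₂ →
        (∀ x : ℝ, u₁ x = (R₂ / T) * u₂ x + (1 / T) * (starRingEnd ℂ) (u₂ x)) →
        Tendsto (fun x : ℝ => Complex.exp (2 * Complex.I * k * (x : ℂ)) * rJost k u₁ x)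
          atBot (𝓝 R₂)) := by
  by_cases hk0 : k = 0
  · have hr : rJost k u₁ = fun _ => 0 := by
      ext x; simp [rJost, wJost, hk0]
    rw [hr]
    refine ⟨by simp, ⟨0, by simp⟩, ⟨0, LipschitzWith.const _⟩, ?_, tendsto_const_nhds, ?_⟩
    · refine Eventually.of_forall fun x => ?_
      simpa [hk0] using hasDerivAt_const x (0 : ℂ)
    · intro kr h1 h2
      rw [h1] at hk0
      exact absurd (by exact_mod_cast hk0) h2
  · have h0 := RJ.u_ne hmeas h1 h2 hk hk0 hu
    have hw := RJ.w_pos hmeas h1 h2 hk hk0 hu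
    exact ⟨fun x => RJ.norm_r_lt (hw x), ⟨1, fun x => (RJ.norm_r_lt (hw x)).le⟩,
      RJ.r_lip hmeas h1 hk0 hu.1 h0 hw, RJ.r_deriv hmeas h1 hk0 hu.1 h0 hw,
      RJ.r_top hmeas h1 h2 hk hk0 hu h0 hw,
      fun kr hkr _ T R₂ u₂ hT hu₂ hrel => RJ.r_bot hmeas h1 h2 hkr hk0 h0 hw hT hu₂ hrel⟩
end
end

section
/- Let c satisfy [H1] and [H2], let κ ≥ 0, and (for κ > 0) let u₁ be the real-valued Jost solution from +∞ at k = iκ; set m₁(x) = e^{κx} u₁(x). Then for every x ∈ ℝ, ( 2κ m₁(x) − m₁'(x) ) · e^{κ ∫ₓ^∞ Q(s) ds} ≥ 2κ, where Q = 1 − 1/c. (For κ = 0 both sides vanish.) -/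
open MeasureTheory Filter Topology

noncomputable section

/-- Real form of the equation at `k = iκ`: `u'' = (κ²/c²) u` a.e., with `u` of class `C¹`
with locally absolutely continuous derivative. -/
def SolvesHelmholtzR (c : ℝ → ℝ) (κ : ℝ) (u : ℝ → ℝ) : Prop :=
  ContDiff ℝ 1 u ∧
  ∀ a b : ℝ, deriv u b = deriv u a + ∫ x in a..b, (κ ^ 2 / (c x) ^ 2) * u x

/-- The real-valued Jost solution from `+∞` at `k = iκ`: `e^{κx} u(x) → 1` as `x → +∞`. -/
def IsJostPlusR (c : ℝ → ℝ) (κ : ℝ) (u : ℝ → ℝ) : Prop :=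
  SolvesHelmholtzR c κ u ∧
  Tendsto (fun x : ℝ => Real.exp (κ * x) * u x) atTop (𝓝 1)


lemma aux_int_Q (c : ℝ → ℝ) (hmeas : Measurable c) (h1 : HypH1 c) (h2 : HypH2 c) :
    Integrable (Qfun c) := by
  obtain ⟨c₀, hc₀, cM, hcM, h⟩ := h1
  obtain ⟨C, hC, δ, hδ, h'⟩ := h2
  have hi : Integrable (fun x : ℝ => (1 + ‖x‖ ^ 2) ^ (-(1 + δ) / 2)) :=
    integrable_rpow_neg_one_add_norm_sq (by simp [hδ])
  refine (hi.const_mul (C / c₀)).mono' ?_ ?_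
  · exact (by unfold Qfun; fun_prop : Measurable (Qfun c)).aestronglyMeasurable
  · filter_upwards [h, h'] with x hx hx'
    have hp : 0 < c x := hc₀.trans hx.1
    have : Qfun c x = (c x - 1) / c x := by unfold Qfun; field_simp
    rw [this, Real.norm_eq_abs, abs_div, abs_of_pos hp, Real.norm_eq_abs, sq_abs]
    calc |c x - 1| / c x ≤ (C * (1 + x ^ 2) ^ (-(1 + δ) / 2)) / c₀ := by
          have := hx.1.le
          gcongr
      _ = _ := by ring

lemma aux_antitone (a b : ℝ) (hab : a ≤ b)
    (f : ℝ → ℝ) (hf : AbsolutelyContinuousOnInterval f a b)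
    (hd : ∀ᵐ x, x ∈ Set.uIcc a b → ∃ d, d ≤ 0 ∧ HasDerivAt f d x) : f b ≤ f a := by
  have h := hf.integral_deriv_eq_sub
  have : ∫ x in a..b, deriv f x ≤ ∫ x in a..b, (0 : ℝ) := by
    refine intervalIntegral.integral_mono_ae_restrict hab hf.intervalIntegrable_deriv (by simp) ?_
    filter_upwards [ae_restrict_of_ae hd, ae_restrict_mem measurableSet_Icc] with x hx hx'
    rw [Set.uIcc_of_le hab] at hx
    obtain ⟨d, hd, hd'⟩ := hx hx'
    rw [hd'.deriv]; exact hd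
  simp at this
  linarith

lemma aux_li (c : ℝ → ℝ) (hmeas : Measurable c) (h1 : HypH1 c) (n : ℕ) (u : ℝ → ℝ)
    (hu : Continuous u) (a b : ℝ) :
    IntervalIntegrable (fun x => (1 / c x) ^ n * u x) volume a b := by
  obtain ⟨c₀, hc₀, cM, hcM, h⟩ := h1
  have h0 : IntervalIntegrable (fun x => (1 / c₀) ^ n * u x) volume a b :=
    (continuous_const.mul hu).intervalIntegrable _ _
  refine h0.mono_fun ?_ ?_
  · exact (by fun_prop : Measurable _).aestronglyMeasurable
  · filter_upwards [ae_restrict_of_ae h] with x hx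
    have hp : 0 < c x := hc₀.trans hx.1
    have := hx.1.le
    rw [norm_mul, norm_mul, Real.norm_of_nonneg (show 0 ≤ (1 / c x) ^ n by positivity),
      Real.norm_of_nonneg (show 0 ≤ (1 / c₀) ^ n by positivity)]
    gcongr

lemma aux_loc (f : ℝ → ℝ) (h : ∀ a b, IntervalIntegrable f volume a b) :
    LocallyIntegrable f := fun x =>
  ⟨Set.Icc (x - 1) (x + 1), Icc_mem_nhds (by linarith) (by linarith),
    (intervalIntegrable_iff_integrableOn_Icc_of_le (by linarith)).1 (h _ _)⟩

lemma aux_const_ac (r a b : ℝ) : AbsolutelyContinuousOnInterval (fun _ => r) a b :=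
  (LipschitzWith.const r).lipschitzOnWith.absolutelyContinuousOnInterval

lemma aux_lip (c : ℝ → ℝ) (hmeas : Measurable c) (h1 : HypH1 c) :
    ∃ K, LipschitzWith K (fun x => ∫ s in (0:ℝ)..x, 1 / c s) := by
  have hi := fun a b => aux_li c hmeas h1 1 (fun _ => 1) continuous_const a b
  simp only [pow_one, mul_one] at hi
  obtain ⟨c₀, hc₀, cM, hcM, h⟩ := h1
  refine ⟨Real.toNNReal (1 / c₀), LipschitzWith.of_dist_le_mul fun x y => ?_⟩
  rw [Real.dist_eq, Real.dist_eq, intervalIntegral.integral_interval_sub_left (hi _ _) (hi _ _),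
    Real.coe_toNNReal _ (by positivity),
    ← Real.norm_eq_abs]
  refine intervalIntegral.norm_integral_le_of_norm_le_const_ae ?_
  filter_upwards [h] with s hs _
  have hp : 0 < c s := hc₀.trans hs.1
  have := hs.1.le
  rw [Real.norm_of_nonneg (by positivity)]
  gcongr

lemma aux_exp_ac (g : ℝ → ℝ) (K : NNReal) (hg : LipschitzWith K g) (a b : ℝ) :
    AbsolutelyContinuousOnInterval (fun x => Real.exp (g x)) a b := by
  obtain ⟨M, hM⟩ := (isCompact_uIcc (a := a) (b := b)).bddAbove_image hg.continuous.continuousOn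
  have h1 : LipschitzOnWith (Real.toNNReal (Real.exp M)) Real.exp (Set.Iic M) := by
    refine Convex.lipschitzOnWith_of_nnnorm_deriv_le (fun x _ => Real.differentiableAt_exp) ?_
      (convex_Iic M)
    intro x hx
    rw [← NNReal.coe_le_coe, Real.coe_toNNReal _ (Real.exp_pos _).le]
    simpa using hx
  have h2 : LipschitzOnWith _ (Real.exp ∘ g) (Set.uIcc a b) :=
    h1.comp hg.lipschitzOnWith (fun x hx => hM ⟨x, hx, rfl⟩)
  exact h2.absolutelyContinuousOnInterval

lemma aux_PV (c : ℝ → ℝ) (hmeas : Measurable c) (h1 : HypH1 c) (κ : ℝ) (hκ : 0 ≤ κ)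
    (u : ℝ → ℝ) (hu : SolvesHelmholtzR c κ u) :
    Antitone (fun x => -(u x * deriv u x) * Real.exp (2 * κ * ∫ s in (0:ℝ)..x, 1 / c s)) := by
  intro a b hab
  obtain ⟨hC, hI⟩ := hu
  have hud : Differentiable ℝ u := hC.differentiable (by simp)
  have hi1 := fun a b => aux_li c hmeas h1 1 (fun _ => 1) continuous_const a b
  simp only [pow_one, mul_one] at hi1
  have hi2 : ∀ a b, IntervalIntegrable (fun x => (κ ^ 2 / (c x) ^ 2) * u x) volume a b := by
    intro a b
    convert (aux_li c hmeas h1 2 u hC.continuous a b).const_mul (κ ^ 2) using 2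
    ring
  have hdu : deriv u = fun x => deriv u a + ∫ s in a..x, (κ ^ 2 / (c s) ^ 2) * u s := by
    funext x; exact hI a x
  have acdu : AbsolutelyContinuousOnInterval (deriv u) a b := by
    rw [hdu]
    exact (aux_const_ac _ a b).fun_add
      ((hi2 a b).absolutelyContinuousOnInterval_intervalIntegral (by simp))
  have acu : AbsolutelyContinuousOnInterval u a b := by
    have : u = fun x => u a + ∫ s in a..x, deriv u s := by
      funext x
      rw [intervalIntegral.integral_deriv_eq_sub (fun x _ => hud x)
        ((hC.continuous_deriv le_rfl).intervalIntegrable _ _)]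
      ring
    rw [this]
    exact (aux_const_ac _ a b).fun_add
      (((hC.continuous_deriv le_rfl).intervalIntegrable a b).absolutelyContinuousOnInterval_intervalIntegral (by simp))
  obtain ⟨K, hK⟩ := aux_lip c hmeas h1
  have acV : AbsolutelyContinuousOnInterval
      (fun x => Real.exp (2 * κ * ∫ s in (0:ℝ)..x, 1 / c s)) a b :=
    aux_exp_ac _ _ ((lipschitzWith_smul (2 * κ)).comp hK) a b
  refine aux_antitone a b hab _ ((acu.fun_mul acdu).fun_neg.fun_mul acV) ?_
  have l1 : LocallyIntegrable (fun x => 1 / c x) := aux_loc _ hi1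
  have l2 : LocallyIntegrable (fun x => (κ ^ 2 / (c x) ^ 2) * u x) := aux_loc _ hi2
  filter_upwards [_root_.LocallyIntegrable.ae_hasDerivAt_integral l1, _root_.LocallyIntegrable.ae_hasDerivAt_integral l2] with x hx1 hx2 _
  have e1 := ((hx1 0).const_mul (2 * κ)).exp
  have e2 : HasDerivAt (deriv u) ((κ ^ 2 / (c x) ^ 2) * u x) x := by
    rw [hdu]; exact (hx2 a).const_add _
  refine ⟨_, ?_, ((((hud x).hasDerivAt.mul e2).neg).mul e1)⟩
  have : 0 ≤ Real.exp (2 * κ * ∫ s in (0:ℝ)..x, 1 / c s) * (deriv u x + κ / c x * u x) ^ 2 := by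
    positivity
  simp only [Pi.neg_apply, Pi.mul_apply]
  refine le_of_eq_of_le ?_ (neg_nonpos.2 this)
  ring

lemma aux_Ioi (c : ℝ → ℝ) (hQ : Integrable (Qfun c)) (x : ℝ) :
    ∫ s in Set.Ioi x, Qfun c s = (∫ s in Set.Ioi (0:ℝ), Qfun c s) - ∫ s in (0:ℝ)..x, Qfun c s := by
  have := intervalIntegral.integral_interval_add_Ioi (a := 0) (b := x) hQ.integrableOn hQ.integrableOn
  linarith

lemma aux_Q_tendsto (c : ℝ → ℝ) (hQ : Integrable (Qfun c)) :
    Tendsto (fun x => ∫ s in Set.Ioi x, Qfun c s) atTop (𝓝 0) := by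
  have h := intervalIntegral_tendsto_integral_Ioi (0:ℝ) (hQ.integrableOn (s := Set.Ioi (0:ℝ))) tendsto_id
  have h2 := (tendsto_const_nhds (x := ∫ s in Set.Ioi (0:ℝ), Qfun c s)).sub h
  rw [sub_self] at h2
  refine h2.congr fun x => ?_
  rw [aux_Ioi c hQ x]; rfl

lemma aux_W (c : ℝ → ℝ) (hmeas : Measurable c) (h1 : HypH1 c) (hQ : Integrable (Qfun c)) (x : ℝ) :
    x + ∫ s in Set.Ioi x, Qfun c s =
      (∫ s in Set.Ioi (0:ℝ), Qfun c s) + ∫ s in (0:ℝ)..x, 1 / c s := by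
  have hi1 := aux_li c hmeas h1 1 (fun _ => 1) continuous_const 0 x
  simp only [pow_one, mul_one] at hi1
  have : ∫ s in (0:ℝ)..x, Qfun c s = x - ∫ s in (0:ℝ)..x, 1 / c s := by
    unfold Qfun
    rw [intervalIntegral.integral_sub (by simp) hi1]
    simp
  rw [aux_Ioi c hQ x, this]; ring

lemma aux_lower (κ : ℝ) (hκ : 0 < κ) (u R : ℝ → ℝ) (hC : ContDiff ℝ 1 u)
    (hm : Tendsto (fun x : ℝ => Real.exp (κ * x) * u x) atTop (𝓝 1))
    (hR : Tendsto R atTop (𝓝 0))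
    (hanti : Antitone (fun x => -(u x * deriv u x) * Real.exp (2 * κ * (x + R x)))) (x : ℝ) :
    κ ≤ -(u x * deriv u x) * Real.exp (2 * κ * (x + R x)) := by
  by_contra! hlt
  set L₀ := -(u x * deriv u x) * Real.exp (2 * κ * (x + R x)) with hL₀
  obtain ⟨L, hL1, hL2⟩ := exists_between hlt
  have hud : Differentiable ℝ u := hC.differentiable (by simp)
  have t1 : Tendsto (fun y => L₀ * Real.exp (-(2 * κ * R y))) atTop (𝓝 L₀) := by
    have : Tendsto (fun y => L₀ * Real.exp (-(2 * κ * R y))) atTop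
        (𝓝 (L₀ * Real.exp (-(2 * κ * 0)))) :=
      ((Real.continuous_exp.tendsto _).comp (hR.const_mul (2 * κ)).neg).const_mul L₀
    simpa using this
  obtain ⟨N, hN⟩ := eventually_atTop.1 ((t1.eventually_lt_const hL1).and (eventually_ge_atTop x))
  have key : ∀ y ≥ N, -(u y * deriv u y) * Real.exp (2 * κ * y) ≤ L := by
    intro y hy
    obtain ⟨h1, h2⟩ := hN y hy
    have h3 : -(u y * deriv u y) * Real.exp (2 * κ * (y + R y)) ≤ L₀ := hanti h2
    have h4 := mul_le_mul_of_nonneg_right h3 (Real.exp_pos (-(2 * κ * R y))).le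
    rw [mul_assoc, ← Real.exp_add] at h4
    ring_nf at h4 h1 ⊢
    linarith
  let g : ℝ → ℝ := fun y => u y ^ 2 - L / κ * Real.exp (-(2 * κ * y))
  have hg : ∀ y, HasDerivAt g (2 * u y * deriv u y + 2 * L * Real.exp (-(2 * κ * y))) y := by
    intro y
    have a1 := (hud y).hasDerivAt.pow 2
    have a2 := (((hasDerivAt_id y).const_mul (2 * κ)).neg.exp).const_mul (L / κ)
    refine (a1.sub a2).congr_deriv ?_
    simp
    field_simp
  have gmono : MonotoneOn g (Set.Ici N) := by
    refine monotoneOn_of_deriv_nonneg (convex_Ici N)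
      (fun y _ => (hg y).continuousAt.continuousWithinAt)
      (fun y _ => (hg y).differentiableAt.differentiableWithinAt) ?_
    intro y hy
    rw [interior_Ici] at hy
    rw [(hg y).deriv]
    have h := mul_le_mul_of_nonneg_right (key y (le_of_lt hy)) (Real.exp_pos (-(2 * κ * y))).le
    rw [mul_assoc, ← Real.exp_add, add_neg_cancel, Real.exp_zero] at h
    linarith
  have expt : Tendsto (fun y => Real.exp (-(2 * κ * y))) atTop (𝓝 0) :=
    Real.tendsto_exp_neg_atTop_nhds_zero.comp (tendsto_id.const_mul_atTop (by positivity))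
  have gform : ∀ y, g y = Real.exp (-(2 * κ * y)) * ((Real.exp (κ * y) * u y) ^ 2 - L / κ) := by
    intro y
    have : Real.exp (-(2 * κ * y)) * Real.exp (κ * y) ^ 2 = 1 := by
      rw [← Real.exp_nat_mul, ← Real.exp_add]; simp; ring
    simp only [g]
    linear_combination (-u y ^ 2) * this
  have mt : Tendsto (fun y => (Real.exp (κ * y) * u y) ^ 2 - L / κ) atTop (𝓝 (1 ^ 2 - L / κ)) :=
    (hm.pow 2).sub_const _
  have gt : Tendsto g atTop (𝓝 0) := by
    have := expt.mul mt
    rw [zero_mul] at this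
    exact this.congr fun y => (gform y).symm
  have gle : ∀ y ≥ N, g y ≤ 0 := by
    intro y hy
    refine ge_of_tendsto gt ?_
    filter_upwards [eventually_ge_atTop y] with z hz
    exact gmono hy (hy.trans hz) hz
  have : 1 ^ 2 - L / κ ≤ 0 := by
    refine le_of_tendsto mt ?_
    filter_upwards [eventually_ge_atTop N] with y hy
    have h := gle y hy
    rw [gform] at h
    exact nonpos_of_mul_nonpos_right h (Real.exp_pos _)
  have h2 : L / κ < 1 := (div_lt_one hκ).2 hL2
  linarith

/-- The key pointwise lower bound `(2κ m₁ - m₁') e^{κ∫ₓ^∞ Q} ≥ 2κ`, where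
`m₁(x) = e^{κx} u₁(x)`. -/
theorem m1_lower_bound (c : ℝ → ℝ) (hmeas : Measurable c)
    (h1 : HypH1 c) (h2 : HypH2 c)
    (κ : ℝ) (hκ : 0 ≤ κ) (u₁ : ℝ → ℝ) (hu : IsJostPlusR c κ u₁) :
    ∀ x : ℝ,
      2 * κ ≤
        (2 * κ * (Real.exp (κ * x) * u₁ x) -
            deriv (fun y : ℝ => Real.exp (κ * y) * u₁ y) x) *
          Real.exp (κ * ∫ s in Set.Ioi x, Qfun c s) := by
  intro x
  have hQ := aux_int_Q c hmeas h1 h2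
  obtain ⟨hS, hm⟩ := hu
  have hC := hS.1
  have hud : Differentiable ℝ u₁ := hC.differentiable (by simp)
  have hder : deriv (fun y : ℝ => Real.exp (κ * y) * u₁ y) x =
      κ * (Real.exp (κ * x) * u₁ x) + Real.exp (κ * x) * deriv u₁ x := by
    have a1 := (((hasDerivAt_id x).const_mul κ).exp).mul (hud x).hasDerivAt
    refine a1.deriv.trans ?_
    simp
    ring
  rw [hder]
  rcases hκ.eq_or_lt with rfl | hκ
  · have hI := hS.2
    have hd : ∀ y, deriv u₁ y = deriv u₁ x := by
      intro y
      have := hI x y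
      simpa using this
    simp
    by_contra! hpos
    have hform : ∀ y, u₁ y = u₁ 0 + deriv u₁ x * y := by
      intro y
      have := intervalIntegral.integral_deriv_eq_sub (a := 0) (b := y) (fun z _ => hud z)
        ((hC.continuous_deriv le_rfl).intervalIntegrable _ _)
      simp only [hd] at this
      simp at this
      linarith
    have ht : Tendsto u₁ atTop atTop := by
      rw [funext hform]
      exact tendsto_atTop_add_const_left _ _ (tendsto_id.const_mul_atTop hpos)
    simp at hm
    exact not_tendsto_nhds_of_tendsto_atTop ht _ hm
  · have hA := aux_PV c hmeas h1 κ hκ.le u₁ hS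
    set R : ℝ → ℝ := fun x => ∫ s in Set.Ioi x, Qfun c s with hR
    have hA' : Antitone (fun x => -(u₁ x * deriv u₁ x) * Real.exp (2 * κ * (x + R x))) := by
      intro a b hab
      have h := mul_le_mul_of_nonneg_right (hA hab)
        (Real.exp_pos (2 * κ * ∫ s in Set.Ioi (0:ℝ), Qfun c s)).le
      simp only [mul_assoc, ← Real.exp_add] at h
      simp only [hR, aux_W c hmeas h1 hQ]
      ring_nf at h ⊢
      exact h
    have hlow := aux_lower κ hκ u₁ R hC hm (aux_Q_tendsto c hQ) hA'
    have hneg : ∀ y, 0 < -(u₁ y * deriv u₁ y) := by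
      intro y
      exact pos_of_mul_pos_left (hκ.trans_le (hlow y)) (Real.exp_pos _).le
    have hne : ∀ y, u₁ y ≠ 0 := by
      intro y h0
      have := hneg y
      simp [h0] at this
    obtain ⟨z, hz⟩ := (hm.eventually_const_lt (show (0:ℝ) < 1 by norm_num)).exists
    have hz : 0 < u₁ z := pos_of_mul_pos_right hz (Real.exp_pos _).le
    have hupos : 0 < u₁ x := by
      by_contra! hle
      have hs := mem_range_of_exists_le_of_exists_ge hC.continuous ⟨x, hle⟩ ⟨z, hz.le⟩
      obtain ⟨w, hw⟩ := hs
      exact hne w hw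
    have hdneg : deriv u₁ x < 0 := by
      have := hneg x
      by_contra! hge
      have := mul_nonneg hupos.le hge
      linarith
    have hl := hlow x
    have hE : Real.exp (2 * κ * (x + R x)) = (Real.exp (κ * x) * Real.exp (κ * R x)) ^ 2 := by
      rw [← Real.exp_add, ← Real.exp_nat_mul]; congr 1; push_cast; ring
    rw [hE] at hl
    change _ ≤ _ * Real.exp (κ * R x)
    set E := Real.exp (κ * x) * Real.exp (κ * R x) with hEd
    have hEp : 0 < E := by positivity
    have : (2 * κ * (Real.exp (κ * x) * u₁ x) -
        (κ * (Real.exp (κ * x) * u₁ x) + Real.exp (κ * x) * deriv u₁ x)) * Real.exp (κ * R x)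
        = E * (κ * u₁ x - deriv u₁ x) := by rw [hEd]; ring
    rw [this]
    have hp : 0 < κ * u₁ x - deriv u₁ x := by
      have := mul_pos hκ hupos
      linarith
    refine (sq_le_sq₀ (by positivity) (by positivity)).1 ?_
    have h1 : 0 ≤ E ^ 2 * (κ * u₁ x + deriv u₁ x) ^ 2 := by positivity
    nlinarith [mul_le_mul_of_nonneg_left hl hκ.le]
end
end

section
/- Let c satisfy [H1] and [H2]. Suppose U₁, U₂ : ℝ × {Im k ≥ 0} → ℂ are such that for each k with Im k ≥ 0, U₁(·,k) and U₂(·,k) are the Jost solutions from +∞ and from −∞ at k, and for each fixed x the maps k ↦ U₁(x,k), ∂ₓU₁(x,k), U₂(x,k), ∂ₓU₂(x,k) are holomorphic on {Im k > 0} and continuous on {Im k ≥ 0}. Suppose T : {Im k ≥ 0} → ℂ is continuous, holomorphic on {Im k > 0}, and satisfies T(k) · ( ∂ₓU₁(x,k) U₂(x,k) − U₁(x,k) ∂ₓU₂(x,k) ) = 2ik for all x ∈ ℝ and all k with Im k ≥ 0. Then |T(k) · e^{ik ∫_ℝ Q(s) ds}| ≤ 1 for every k with Im k ≥ 0, where Q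 = 1 − 1/c. -/
open MeasureTheory Filter Topology

noncomputable section

/-- Regularity in `k` of a family of solutions: holomorphy on the open upper half-plane
and continuity up to the real axis, for the solution and its `x`-derivative. -/
def JostFamilyRegular (U : ℂ → ℝ → ℂ) : Prop :=
  ∀ y : ℝ,
    DifferentiableOn ℂ (fun k => U k y) {k : ℂ | 0 < k.im} ∧
    ContinuousOn (fun k => U k y) {k : ℂ | 0 ≤ k.im} ∧
    DifferentiableOn ℂ (fun k => deriv (U k) y) {k : ℂ | 0 < k.im} ∧
    ContinuousOn (fun k => deriv (U k) y) {k : ℂ | 0 ≤ k.im}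


theorem ll_ftc {E : Type*} [NormedAddCommGroup E] [NormedSpace ℝ E] {f : ℝ → E}
    (hf : LocallyLipschitz f) (h0 : ∀ᵐ x, HasDerivAt f 0 x) (a b : ℝ) : f a = f b := by
  obtain ⟨K, hK⟩ := (hf.locallyLipschitzOn (s := Set.uIcc a b)).exists_lipschitzOnWith_of_compact
    isCompact_uIcc
  obtain ⟨C, hC⟩ := hK.absolutelyContinuousOnInterval.const_of_ae_hasDerivAt_zero
    (by filter_upwards [h0] with x hx _ using hx)
  rw [hC a (by simp), hC b (by simp)]

theorem prim_li {E : Type*} [NormedAddCommGroup E] {f : ℝ → E}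
    (hm : AEStronglyMeasurable f volume) {B : ℝ → ℝ} (hB : Continuous B)
    (hfB : ∀ᵐ x, ‖f x‖ ≤ B x) : LocallyIntegrable f volume :=
  (hB.locallyIntegrable (μ := volume)).mono hm (by
    filter_upwards [hfB] with x hx using hx.trans (le_abs_self _))

theorem prim_ll {E : Type*} [NormedAddCommGroup E] [NormedSpace ℝ E] [CompleteSpace E] {f : ℝ → E}
    (hm : AEStronglyMeasurable f volume) {B : ℝ → ℝ} (hB : Continuous B)
    (hfB : ∀ᵐ x, ‖f x‖ ≤ B x) : LocallyLipschitz (fun x => ∫ t in (0:ℝ)..x, f t) := by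
  have hli := prim_li hm hB hfB
  have hii : ∀ a b, IntervalIntegrable f volume a b := fun a b =>
    intervalIntegrable_iff.mpr
      ((hli.integrableOn_isCompact isCompact_uIcc).mono_set Set.uIoc_subset_uIcc)
  intro x
  obtain ⟨M, hM⟩ := (isCompact_Icc (a := x - 1) (b := x + 1)).exists_bound_of_continuousOn
    hB.continuousOn
  have hM0 : 0 ≤ M := (norm_nonneg _).trans (hM x (by constructor <;> linarith))
  refine ⟨⟨M, hM0⟩, Set.Icc (x-1) (x+1), Icc_mem_nhds (by linarith) (by linarith), ?_⟩
  refine LipschitzOnWith.of_dist_le_mul ?_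
  intro y hy z hz
  rw [dist_eq_norm, intervalIntegral.integral_interval_sub_left (hii _ _) (hii _ _), Real.dist_eq]
  refine intervalIntegral.norm_integral_le_of_norm_le_const_ae ?_
  filter_upwards [hfB] with t ht hmem
  have : t ∈ Set.Icc (x-1) (x+1) := Set.OrdConnected.uIcc_subset (s := Set.Icc (x-1) (x+1)) inferInstance hz hy (Set.uIoc_subset_uIcc hmem)
  exact ht.trans ((le_abs_self _).trans (hM t this))

/-- locally Lipschitz with a.e. nonpositive derivative is antitone -/
theorem ll_antitone {f f' : ℝ → ℝ}
    (hf : LocallyLipschitz f) (h0 : ∀ᵐ x, HasDerivAt f (f' x) x) (hn : ∀ᵐ x, f' x ≤ 0) :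
    Antitone f := by
  intro a b hab
  obtain ⟨K, hK⟩ := (hf.locallyLipschitzOn (s := Set.uIcc a b)).exists_lipschitzOnWith_of_compact
    isCompact_uIcc
  have h := hK.absolutelyContinuousOnInterval.integral_deriv_eq_sub
  have : ∫ x in a..b, deriv f x ≤ 0 := by
    rw [intervalIntegral.integral_of_le hab]
    apply integral_nonpos_of_ae
    apply ae_restrict_of_ae
    filter_upwards [h0, hn] with x hx hy
    rw [hx.deriv]; exact hy
  linarith

/-- if a function and its derivative both converge then the derivative tends to zero -/
theorem deriv_lim_zero {g g' : ℝ → ℂ} {l l' : ℂ} (hd : ∀ x, HasDerivAt g (g' x) x)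
    (hg : Tendsto g atTop (𝓝 l)) (hg' : Tendsto g' atTop (𝓝 l')) : l' = 0 := by
  have h1 : Tendsto (fun x => g (x+1) - g x) atTop (𝓝 (l - l)) :=
    (hg.comp (tendsto_atTop_add_const_right _ 1 tendsto_id)).sub hg
  have h2 : Tendsto (fun x => g (x+1) - g x) atTop (𝓝 l') := by
    rw [Metric.tendsto_atTop] at hg' ⊢
    intro ε hε
    obtain ⟨N, hN⟩ := hg' (ε/2) (by linarith)
    refine ⟨N, fun x hx => ?_⟩
    have := Convex.norm_image_sub_le_of_norm_hasDerivWithin_le (f := fun y => g y - (y:ℂ) * l')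
      (f' := fun y => g' y - l') (s := Set.Icc x (x+1)) (C := ε/2) (x := x) (y := x+1)
      (fun y hy => by
        have := ((hd y).sub ((Complex.ofRealCLM.hasDerivAt (x := y)).mul_const l'))
        exact (this.congr_deriv (by simp)).hasDerivWithinAt)
      (fun y hy => by
        have := hN y (by have := hy.1; linarith)
        rw [dist_eq_norm] at this; exact this.le) (convex_Icc _ _) (by simp) (by simp)
    rw [dist_eq_norm]
    have e : g (x + 1) - ((x + 1 : ℝ) : ℂ) * l' - (g x - (x:ℂ) * l') = g (x+1) - g x - l' := by
      push_cast; ring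
    rw [e] at this
    simp at this
    linarith
  simpa using tendsto_nhds_unique h2 h1

theorem flux_contDiff (k : ℂ) : ContDiff ℝ 1 (fun p : ℂ × ℂ × ℝ =>
    (p.1 * (starRingEnd ℂ) p.2.1 / (Complex.I * k)).re * Real.exp (2 * k.im * p.2.2)) := by
  have h1 : ContDiff ℝ 1 (fun p : ℂ × ℂ × ℝ => (starRingEnd ℂ) p.2.1) :=
    (Complex.conjCLE : ℂ →L[ℝ] ℂ).contDiff.comp (contDiff_fst.comp contDiff_snd)
  have h2 : ContDiff ℝ 1 (fun p : ℂ × ℂ × ℝ => p.1 * (starRingEnd ℂ) p.2.1 / (Complex.I * k)) :=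
    (contDiff_fst.mul h1).div_const _
  have h3 : ContDiff ℝ 1 (fun p : ℂ × ℂ × ℝ =>
      (p.1 * (starRingEnd ℂ) p.2.1 / (Complex.I * k)).re) :=
    Complex.reCLM.contDiff.comp h2
  have h4 : ContDiff ℝ 1 (fun p : ℂ × ℂ × ℝ => 2 * k.im * p.2.2) :=
    contDiff_const.mul (contDiff_snd.comp contDiff_snd)
  exact h3.mul h4.exp

theorem flux_ll (k : ℂ) {v u : ℝ → ℂ} {W : ℝ → ℝ} (hv : LocallyLipschitz v)
    (hu : LocallyLipschitz u) (hW : LocallyLipschitz W) : LocallyLipschitz (fun x =>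
    (v x * (starRingEnd ℂ) (u x) / (Complex.I * k)).re * Real.exp (2 * k.im * W x)) :=
  LocallyLipschitz.comp (g := fun x => (v x, u x, W x)) (flux_contDiff k).locallyLipschitz
    (hv.prodMk (hu.prodMk hW))

set_option maxHeartbeats 1000000 in
theorem half_bound (c : ℝ → ℝ) (hmeas : Measurable c) (c₀ : ℝ) (hc₀ : 0 < c₀)
    (hc : ∀ᵐ x : ℝ, c₀ < c x) (hQ : Integrable (Qfun c)) (k : ℂ) (hk : 0 < k.im)
    (u : ℝ → ℂ) (hu : IsJostPlus c k u) :
    Real.exp (-(2 * k.im * ∫ s in Set.Ioi (0:ℝ), Qfun c s)) ≤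
      (deriv u 0 * (starRingEnd ℂ) (u 0) / (Complex.I * k)).re := by
  obtain ⟨⟨hu1, hode⟩, hlim⟩ := hu
  have hk0 : k ≠ 0 := by rintro rfl; simp at hk
  set M : ℝ := 1 / c₀ with hM
  have hMpos : 0 < M := by positivity
  have hw : ∀ᵐ x : ℝ, 0 < 1 / c x ∧ 1 / c x ≤ M := by
    filter_upwards [hc] with x hx
    exact ⟨by have := hc₀.trans hx; positivity, one_div_le_one_div_of_le hc₀ hx.le⟩
  set v := deriv u with hv
  have hud : ∀ x, HasDerivAt u (v x) x := fun x =>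
    (hu1.differentiable (by norm_num) x).hasDerivAt
  have huc : Continuous u := hu1.continuous
  have hvc : Continuous v := hu1.continuous_deriv (by norm_num)
  set f : ℝ → ℂ := fun x => -(k ^ 2 / ((c x : ℂ) ^ 2)) * u x with hf
  have hfm : Measurable f := by
    have := huc.measurable
    fun_prop
  have hfb : ∀ᵐ x : ℝ, ‖f x‖ ≤ ‖k‖ ^ 2 * M ^ 2 * ‖u x‖ := by
    filter_upwards [hw] with x hx
    have : ‖f x‖ = ‖k‖ ^ 2 * (1 / c x) ^ 2 * ‖u x‖ := by
      simp [hf, div_eq_mul_inv]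
    rw [this]
    have := hx.1.le
    have := hx.2
    gcongr
  have hBf : Continuous (fun x => ‖k‖ ^ 2 * M ^ 2 * ‖u x‖) := by fun_prop
  have hv_eq : v = fun x => v 0 + ∫ t in (0:ℝ)..x, f t := by
    ext x; exact hode 0 x
  have hvl : LocallyLipschitz v := by
    rw [hv_eq]
    exact (LocallyLipschitz.const _).add (prim_ll hfm.aestronglyMeasurable hBf hfb)
  have hvd : ∀ᵐ x, HasDerivAt v (f x) x := by
    filter_upwards [LocallyIntegrable.ae_hasDerivAt_integral (prim_li hfm.aestronglyMeasurable hBf hfb)] with x hx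
    rw [hv_eq]
    exact (hx 0).const_add _
  have hul : LocallyLipschitz u := hu1.locallyLipschitz
  set e : ℝ → ℂ := fun x => Complex.exp (-(Complex.I * k * (x : ℂ))) with he
  have hed : ∀ x, HasDerivAt e (-(Complex.I * k) * e x) x := by
    intro x
    have h1 : HasDerivAt (fun x : ℝ => -(Complex.I * k * (x : ℂ))) (-(Complex.I * k)) x := by
      exact (((Complex.ofRealCLM.hasDerivAt (x := x)).const_mul (Complex.I * k)).neg).congr_deriv
        (by simp)
    simpa [he, mul_comm] using h1.cexp
  have hec : Continuous e := by fun_prop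
  have hecd : ContDiff ℝ 1 e := by
    apply Complex.contDiff_exp.comp
    exact (contDiff_const.mul Complex.ofRealCLM.contDiff).neg
  have hel : LocallyLipschitz e := hecd.locallyLipschitz
  -- the S function
  set S : ℝ → ℂ := fun x => e x * (v x + Complex.I * k * u x) with hS
  set r : ℝ → ℂ := fun x => e x * (f x + k ^ 2 * u x) with hr
  have hSl : LocallyLipschitz S := by
    have hF : ContDiff ℝ 1 (fun p : ℂ × ℂ × ℂ => p.1 * (p.2.1 + Complex.I * k * p.2.2)) := by
      fun_prop
    exact hF.locallyLipschitz.comp (hel.prodMk (hvl.prodMk hul))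
  have hSd : ∀ᵐ x, HasDerivAt S (r x) x := by
    filter_upwards [hvd] with x hx
    have := (hed x).mul (hx.add ((hud x).const_mul (Complex.I * k)))
    refine this.congr_deriv ?_
    simp only [hr, Pi.add_apply]
    linear_combination (-e x * k ^ 2 * u x) * Complex.I_sq
  have hrm : Measurable r := by
    have := huc.measurable
    have := hec.measurable
    fun_prop
  have hBr : Continuous (fun x => ‖e x‖ * (‖k‖ ^ 2 * M ^ 2 * ‖u x‖ + ‖k‖ ^ 2 * ‖u x‖)) := by
    fun_prop
  have hrb : ∀ᵐ x, ‖r x‖ ≤ ‖e x‖ * (‖k‖ ^ 2 * M ^ 2 * ‖u x‖ + ‖k‖ ^ 2 * ‖u x‖) := by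
    filter_upwards [hfb] with x hx
    simp only [hr, norm_mul]
    gcongr
    refine (norm_add_le _ _).trans ?_
    simp only [norm_mul, norm_pow]
    gcongr
  have hrli := prim_li hrm.aestronglyMeasurable hBr hrb
  have hS_eq : ∀ x, S x = S 0 + ∫ t in (0:ℝ)..x, r t := by
    intro x
    have := ll_ftc (f := fun x => S x - ∫ t in (0:ℝ)..x, r t)
      (hSl.sub (prim_ll hrm.aestronglyMeasurable hBr hrb)) (by
        filter_upwards [hSd, LocallyIntegrable.ae_hasDerivAt_integral hrli] with x h1 h2
        exact (h1.sub (h2 0)).congr_deriv (sub_self _)) 0 x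
    simp at this
    rw [this]; ring
  set q : ℝ → ℝ := fun x => 1 - 1 / (c x) ^ 2 with hq
  have hqi : Integrable q := by
    refine (hQ.norm.const_mul (1 + M)).mono' (by fun_prop) ?_
    filter_upwards [hw] with x hx
    have : q x = (1 + 1 / c x) * Qfun c x := by simp only [hq, Qfun]; ring
    rw [this, norm_mul, Real.norm_of_nonneg (by linarith [hx.1])]
    gcongr
    exact hx.2
  have hri : IntegrableOn r (Set.Ioi 0) := by
    have h1 : r =O[atTop] q := by
      have h2 : (fun x => e x * u x) =O[atTop] (fun _ => (1:ℝ)) := hlim.isBigO_one ℝ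
      have h3 : r = fun x => k ^ 2 * ((q x : ℂ) * (e x * u x)) := by
        ext x
        simp only [hr, hf, hq]
        push_cast
        ring
      rw [h3]
      apply Asymptotics.IsBigO.const_mul_left
      have h4 : (fun x => (q x : ℂ)) =O[atTop] q :=
        Asymptotics.IsBigO.of_bound 1 (Eventually.of_forall fun x => by simp)
      simpa using h4.mul h2
    have := (hrli.locallyIntegrableOn (Set.Ici 0)).integrableOn_of_isBigO_atTop h1
      (hqi.integrableAtFilter _)
    exact this.mono_set Set.Ioi_subset_Ici_self
  have hSlim : ∃ L, Tendsto S atTop (𝓝 L) := by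
    refine ⟨S 0 + ∫ t in Set.Ioi (0:ℝ), r t, ?_⟩
    refine ((intervalIntegral_tendsto_integral_Ioi 0 hri tendsto_id).const_add (S 0)).congr ?_
    intro x
    exact (hS_eq x).symm
  obtain ⟨L, hL⟩ := hSlim
  have hg : Tendsto (fun x => e x * u x) atTop (𝓝 1) := hlim
  have hg'lim : Tendsto (fun x => e x * (v x - Complex.I * k * u x)) atTop
      (𝓝 (L - 2 * (Complex.I * k) * 1)) := by
    refine (hL.sub (hg.const_mul (2 * (Complex.I * k)))).congr ?_
    intro x; simp only [hS]; ring
  have hg'0 : L - 2 * (Complex.I * k) * 1 = 0 := by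
    refine deriv_lim_zero (fun x => ?_) hg hg'lim
    refine ((hed x).mul (hud x)).congr_deriv ?_
    ring
  have hV : Tendsto (fun x => e x * v x) atTop (𝓝 (Complex.I * k)) := by
    rw [hg'0] at hg'lim
    have := hg'lim.add (hg.const_mul (Complex.I * k))
    simp only [mul_one, zero_add] at this
    refine this.congr ?_
    intro x; ring
  set J : ℝ → ℝ := fun x => (v x * (starRingEnd ℂ) (u x) / (Complex.I * k)).re with hJ
  have hIk : Complex.I * k ≠ 0 := mul_ne_zero Complex.I_ne_zero hk0
  have hJlim : Tendsto (fun x => Real.exp (2 * k.im * x) * J x) atTop (𝓝 1) := by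
    have h1 := (hV.mul ((Complex.continuous_conj.tendsto _).comp hg)).div_const (Complex.I * k)
    have h2 := (Complex.continuous_re.tendsto _).comp h1
    simp only [map_one, mul_one, div_self hIk, Complex.one_re] at h2
    refine h2.congr ?_
    intro x
    have hee : e x * (starRingEnd ℂ) (e x) = ((Real.exp (2 * k.im * x) : ℝ) : ℂ) := by
      rw [Complex.mul_conj, Complex.normSq_eq_norm_sq]
      simp only [he, Complex.norm_exp]
      rw [← Real.exp_nat_mul]
      congr 2
      simp
      ring
    simp only [Function.comp, hJ, map_mul]
    rw [← Complex.re_ofReal_mul, ← hee]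
    congr 1
    ring
  set W : ℝ → ℝ := fun x => ∫ t in (0:ℝ)..x, 1 / c t with hW
  have hwm : Measurable (fun x => 1 / c x) := by fun_prop
  have hwb : ∀ᵐ x, ‖1 / c x‖ ≤ (fun _ : ℝ => M) x := by
    filter_upwards [hw] with x hx
    rw [Real.norm_of_nonneg hx.1.le]; exact hx.2
  have hWl : LocallyLipschitz W := prim_ll hwm.aestronglyMeasurable continuous_const hwb
  have hwli := prim_li hwm.aestronglyMeasurable continuous_const hwb
  set N : ℝ → ℝ := fun x => J x * Real.exp (2 * k.im * W x) with hN
  have hNl : LocallyLipschitz N := by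
    exact flux_ll k hvl hul hWl
  have hJd : ∀ᵐ x, HasDerivAt J (-k.im * ((1 / c x) ^ 2 * ‖u x‖ ^ 2 + ‖v x‖ ^ 2 / ‖k‖ ^ 2)) x := by
    filter_upwards [hvd] with x hx
    have h1 : HasDerivAt (fun x => (starRingEnd ℂ) (u x)) ((starRingEnd ℂ) (v x)) x := by
      exact ((Complex.conjCLE : ℂ →L[ℝ] ℂ).hasFDerivAt.comp_hasDerivAt x (hud x)).congr_deriv (by simp)
    have h2 := Complex.reCLM.hasFDerivAt.comp_hasDerivAt x ((hx.mul h1).div_const (Complex.I * k))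
    refine h2.congr_deriv ?_
    have h3 : (f x * (starRingEnd ℂ) (u x) + v x * (starRingEnd ℂ) (v x)) / (Complex.I * k)
       = (((1 / c x) ^ 2 * ‖u x‖ ^ 2 : ℝ) : ℂ) * (Complex.I * k)
        + ((‖v x‖ ^ 2 : ℝ) : ℂ) * (Complex.I * k)⁻¹ := by
      have hu2 : u x * (starRingEnd ℂ) (u x) = ((‖u x‖ ^ 2 : ℝ) : ℂ) := by
        rw [Complex.mul_conj, Complex.normSq_eq_norm_sq]
      have hv2 : v x * (starRingEnd ℂ) (v x) = ((‖v x‖ ^ 2 : ℝ) : ℂ) := by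
        rw [Complex.mul_conj, Complex.normSq_eq_norm_sq]
      rw [hv2, Complex.ofReal_mul, ← hu2]
      simp only [hf]
      rw [add_div, div_eq_mul_inv ((‖v x‖ ^ 2 : ℝ) : ℂ)]
      congr 1
      rw [div_eq_iff hIk]
      push_cast
      linear_combination (-(1 / (c x:ℂ)) ^ 2 * (u x * (starRingEnd ℂ) (u x)) * k ^ 2) * Complex.I_sq
    simp only [Complex.reCLM_apply]
    rw [h3, Complex.add_re, Complex.re_ofReal_mul, Complex.re_ofReal_mul, Complex.inv_re,
      Complex.normSq_eq_norm_sq]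
    simp
    ring
  have hNd : ∀ᵐ x, HasDerivAt N
      ((-k.im * ((1 / c x) ^ 2 * ‖u x‖ ^ 2 + ‖v x‖ ^ 2 / ‖k‖ ^ 2)) * Real.exp (2 * k.im * W x)
        + J x * (Real.exp (2 * k.im * W x) * (2 * k.im * (1 / c x)))) x := by
    filter_upwards [hJd, LocallyIntegrable.ae_hasDerivAt_integral hwli] with x h1 h2
    exact h1.mul ((h2 0).const_mul (2 * k.im)).exp
  have hNanti : Antitone N := by
    refine ll_antitone hNl hNd ?_
    filter_upwards [hw] with x hx
    have hkn : 0 < ‖k‖ := norm_pos_iff.mpr hk0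
    have hJle : J x ≤ ‖u x‖ * (‖v x‖ / ‖k‖) := by
      refine (Complex.re_le_norm _).trans (le_of_eq ?_)
      simp
      ring
    have h1 : 2 * k.im * (1 / c x) * J x ≤
        k.im * ((1 / c x) ^ 2 * ‖u x‖ ^ 2 + ‖v x‖ ^ 2 / ‖k‖ ^ 2) := by
      have h2 : 2 * k.im * (1 / c x) * J x ≤ 2 * k.im * (1 / c x) * (‖u x‖ * (‖v x‖ / ‖k‖)) :=
        mul_le_mul_of_nonneg_left hJle (by have := hx.1; positivity)
      have h3 : 0 ≤ k.im * ((1 / c x) * ‖u x‖ - ‖v x‖ / ‖k‖) ^ 2 := by positivity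
      have h4 : k.im * ((1 / c x) ^ 2 * ‖u x‖ ^ 2 + ‖v x‖ ^ 2 / ‖k‖ ^ 2) =
        2 * k.im * (1 / c x) * (‖u x‖ * (‖v x‖ / ‖k‖)) +
          k.im * ((1 / c x) * ‖u x‖ - ‖v x‖ / ‖k‖) ^ 2 := by ring
      linarith
    have h5 := Real.exp_pos (2 * k.im * W x)
    nlinarith
  have hNlim : Tendsto N atTop (𝓝 (1 * Real.exp (-(2 * k.im * ∫ s in Set.Ioi (0:ℝ), Qfun c s)))) := by
    have h1 := (intervalIntegral_tendsto_integral_Ioi 0 hQ.integrableOn tendsto_id)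
    have h2 := (Real.continuous_exp.tendsto _).comp ((h1.const_mul (2 * k.im)).neg)
    refine (hJlim.mul h2).congr ?_
    intro x
    have hWx : W x = x - ∫ t in (0:ℝ)..x, Qfun c t := by
      have : ∀ t, 1 / c t = 1 - Qfun c t := fun t => by simp [Qfun]
      simp only [hW, this]
      rw [intervalIntegral.integral_sub (by simp) hQ.intervalIntegrable]
      simp
    simp only [Function.comp, hN, hWx, id]
    rw [mul_sub, sub_eq_add_neg, Real.exp_add]
    ring
  have := hNanti.le_of_tendsto hNlim 0
  simpa [hN, hW, hJ] using this

theorem jost_reflect (c : ℝ → ℝ) (k : ℂ) (u : ℝ → ℂ) (hu : IsJostMinus c k u) :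
    IsJostPlus (fun x => c (-x)) k (fun x => u (-x)) := by
  obtain ⟨⟨h1, h2⟩, h3⟩ := hu
  refine ⟨⟨h1.comp contDiff_neg, ?_⟩, ?_⟩
  · intro a b
    rw [deriv_comp_neg, deriv_comp_neg,
      intervalIntegral.integral_comp_neg (fun x => -(k ^ 2 / ((c x : ℂ) ^ 2)) * u x), h2 (-b) (-a)]
    ring
  · refine (h3.comp tendsto_neg_atTop_atBot).congr ?_
    intro x
    simp [Function.comp]

theorem wronskian_alg {k A a B b : ℂ} (hk : k ≠ 0) {s t : ℝ} (hs : 0 < s) (ht : 0 < t)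
    (h1 : s ^ 2 ≤ (A * (starRingEnd ℂ) a / (Complex.I * k)).re)
    (h2 : t ^ 2 ≤ (-B * (starRingEnd ℂ) b / (Complex.I * k)).re) :
    2 * s * t * ‖k‖ ≤ ‖A * b - a * B‖ := by
  have hkn : 0 < ‖k‖ := norm_pos_iff.mpr hk
  have ha : a ≠ 0 := by
    rintro rfl
    simp at h1
    nlinarith
  have hb : b ≠ 0 := by
    rintro rfl
    simp at h2
    nlinarith
  have han : 0 < ‖a‖ := norm_pos_iff.mpr ha
  have hbn : 0 < ‖b‖ := norm_pos_iff.mpr hb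
  have e1 : (A * b - a * B) * ((starRingEnd ℂ) a * (starRingEnd ℂ) b) / (Complex.I * k) =
      ((‖b‖ ^ 2 : ℝ) : ℂ) * (A * (starRingEnd ℂ) a / (Complex.I * k)) +
      ((‖a‖ ^ 2 : ℝ) : ℂ) * (-B * (starRingEnd ℂ) b / (Complex.I * k)) := by
    have ha2 : a * (starRingEnd ℂ) a = ((‖a‖ ^ 2 : ℝ) : ℂ) := by
      rw [Complex.mul_conj, Complex.normSq_eq_norm_sq]
    have hb2 : b * (starRingEnd ℂ) b = ((‖b‖ ^ 2 : ℝ) : ℂ) := by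
      rw [Complex.mul_conj, Complex.normSq_eq_norm_sq]
    rw [← ha2, ← hb2]
    ring
  have e2 := Complex.re_le_norm
    ((A * b - a * B) * ((starRingEnd ℂ) a * (starRingEnd ℂ) b) / (Complex.I * k))
  rw [e1, Complex.add_re, Complex.re_ofReal_mul, Complex.re_ofReal_mul, ← e1] at e2
  simp only [norm_div, norm_mul, Complex.norm_I, one_mul, RCLike.norm_conj] at e2
  rw [le_div_iff₀ hkn] at e2
  have e3 : ‖b‖ ^ 2 * s ^ 2 + ‖a‖ ^ 2 * t ^ 2 ≤
      ‖b‖ ^ 2 * (A * (starRingEnd ℂ) a / (Complex.I * k)).re +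
      ‖a‖ ^ 2 * (-B * (starRingEnd ℂ) b / (Complex.I * k)).re := by gcongr
  have e4 : 2 * s * t * (‖a‖ * ‖b‖) ≤ ‖b‖ ^ 2 * s ^ 2 + ‖a‖ ^ 2 * t ^ 2 := by
    nlinarith [sq_nonneg (‖b‖ * s - ‖a‖ * t)]
  have e5 := (mul_le_mul_of_nonneg_right (e4.trans e3) hkn.le).trans e2
  refine le_of_mul_le_mul_right ?_ (mul_pos han hbn)
  linarith

theorem pos_bound (c : ℝ → ℝ) (hmeas : Measurable c) (c₀ : ℝ) (hc₀ : 0 < c₀)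
    (hc : ∀ᵐ x : ℝ, c₀ < c x) (hQ : Integrable (Qfun c)) (k : ℂ) (hk : 0 < k.im)
    (u₁ u₂ : ℝ → ℂ) (hu₁ : IsJostPlus c k u₁) (hu₂ : IsJostMinus c k u₂) (T : ℂ)
    (hT : T * (deriv u₁ 0 * u₂ 0 - u₁ 0 * deriv u₂ 0) = 2 * Complex.I * k) :
    ‖T * Complex.exp (Complex.I * k * ((∫ s : ℝ, Qfun c s : ℝ) : ℂ))‖ ≤ 1 := by
  have hk0 : k ≠ 0 := by rintro rfl; simp at hk
  have hkn : 0 < ‖k‖ := norm_pos_iff.mpr hk0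
  have b1 := half_bound c hmeas c₀ hc₀ hc hQ k hk u₁ hu₁
  have b2 := half_bound (fun x => c (-x)) (hmeas.comp measurable_neg) c₀ hc₀
    ((Measure.measurePreserving_neg (volume : Measure ℝ)).quasiMeasurePreserving.ae hc)
    hQ.comp_neg k hk _ (jost_reflect c k u₂ hu₂)
  have hQr : ∀ s, Qfun (fun x => c (-x)) s = Qfun c (-s) := fun s => rfl
  simp only [hQr] at b2
  rw [integral_comp_neg_Ioi 0 (Qfun c), deriv_comp_neg, neg_zero] at b2
  set I₁ := ∫ s in Set.Ioi (0:ℝ), Qfun c s with hI₁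
  set I₂ := ∫ s in Set.Iic (0:ℝ), Qfun c s with hI₂
  have hI : ∫ s : ℝ, Qfun c s = I₂ + I₁ :=
    (intervalIntegral.integral_Iic_add_Ioi hQ.integrableOn hQ.integrableOn).symm
  have hsq : ∀ y : ℝ, Real.exp (-(2 * k.im * y)) = Real.exp (-(k.im * y)) ^ 2 := by
    intro y
    rw [← Real.exp_nat_mul]
    congr 1
    push_cast
    ring
  rw [hsq] at b1 b2
  have key := wronskian_alg hk0 (Real.exp_pos _) (Real.exp_pos _) b1 b2
  have hTn := congrArg norm hT
  simp only [norm_mul, Complex.norm_I, mul_one, Complex.norm_ofNat] at hTn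
  have hexp : ‖Complex.exp (Complex.I * k * ((∫ s : ℝ, Qfun c s : ℝ) : ℂ))‖ =
      Real.exp (-(k.im * I₁)) * Real.exp (-(k.im * I₂)) := by
    rw [Complex.norm_exp, ← Real.exp_add, hI]
    congr 1
    rw [mul_comm, Complex.re_ofReal_mul]
    simp
    ring
  rw [norm_mul, hexp]
  have h6 := mul_le_mul_of_nonneg_left key (norm_nonneg T)
  rw [hTn] at h6
  refine le_of_mul_le_mul_right ?_ (mul_pos two_pos hkn)
  linarith

/-- `|T(k) e^{ik ∫Q}| ≤ 1` on the closed upper half-plane. -/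
theorem transmission_bound (c : ℝ → ℝ) (hmeas : Measurable c)
    (h1 : HypH1 c) (h2 : HypH2 c)
    (U₁ U₂ : ℂ → ℝ → ℂ)
    (hU₁ : ∀ k : ℂ, 0 ≤ k.im → IsJostPlus c k (U₁ k))
    (hU₂ : ∀ k : ℂ, 0 ≤ k.im → IsJostMinus c k (U₂ k))
    (hreg₁ : JostFamilyRegular U₁) (hreg₂ : JostFamilyRegular U₂)
    (T : ℂ → ℂ)
    (hTcont : ContinuousOn T {k : ℂ | 0 ≤ k.im})
    (hThol : DifferentiableOn ℂ T {k : ℂ | 0 < k.im})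
    (hTw : ∀ k : ℂ, 0 ≤ k.im → ∀ x : ℝ,
      T k * (deriv (U₁ k) x * U₂ k x - U₁ k x * deriv (U₂ k) x) = 2 * Complex.I * k) :
    ∀ k : ℂ, 0 ≤ k.im →
      ‖T k * Complex.exp (Complex.I * k * ((∫ s : ℝ, Qfun c s : ℝ) : ℂ))‖ ≤ 1 := by
  obtain ⟨c₀, hc₀, cM, -, hc⟩ := h1
  obtain ⟨C, hC, δ, hδ, hcd⟩ := h2
  have hc' : ∀ᵐ x : ℝ, c₀ < c x := hc.mono fun x hx => hx.1
  have hQ : Integrable (Qfun c) := by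
    have h3 : Integrable (fun x : ℝ => ((1:ℝ) + ‖x‖ ^ 2) ^ (-(1 + δ) / 2)) :=
      integrable_rpow_neg_one_add_norm_sq (by simpa using hδ)
    refine (h3.const_mul (C / c₀)).mono' ?_ ?_
    · exact Measurable.aestronglyMeasurable (measurable_const.sub (measurable_const.div hmeas))
    · filter_upwards [hc', hcd] with x hx hx2
      have hcx : 0 < c x := hc₀.trans hx
      have e1 : Qfun c x = (c x - 1) / c x := by
        unfold Qfun; field_simp
      rw [e1, norm_div, Real.norm_of_nonneg hcx.le, Real.norm_eq_abs, Real.norm_eq_abs, sq_abs,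
        div_mul_eq_mul_div]
      have : 0 ≤ |c x - 1| := abs_nonneg _
      gcongr
  have hpos : ∀ k : ℂ, 0 < k.im →
      ‖T k * Complex.exp (Complex.I * k * ((∫ s : ℝ, Qfun c s : ℝ) : ℂ))‖ ≤ 1 := fun k hk =>
    pos_bound c hmeas c₀ hc₀ hc' hQ k hk _ _ (hU₁ k hk.le) (hU₂ k hk.le) (T k) (hTw k hk.le 0)
  intro k hk
  have hcont : ContinuousOn (fun k => ‖T k * Complex.exp (Complex.I * k *
      ((∫ s : ℝ, Qfun c s : ℝ) : ℂ))‖) {k : ℂ | 0 ≤ k.im} := by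
    apply ContinuousOn.norm
    apply hTcont.mul
    exact Continuous.continuousOn (by fun_prop)
  have hmem : k ∈ closure {k : ℂ | 0 < k.im} := by
    rw [Complex.closure_setOfPred_lt_im]; exact hk
  have := mem_closure_iff_nhdsWithin_neBot.mp hmem
  refine le_of_tendsto ((hcont k hk).mono (fun z (hz : 0 < z.im) => hz.le) :
    ContinuousWithinAt _ {k : ℂ | 0 < k.im} k) ?_
  filter_upwards [self_mem_nhdsWithin] with z hz using hpos z hz
end
end

section
/- Let c satisfy [H1] and [H2], let k ∈ ℝ, k ≠ 0, let u₁, u₂ be the Jost solutions at k, and let T(k) ≠ 0, R₂(k) satisfy u₁(·,k) = (R₂(k)/T(k)) u₂(·,k) + (1/T(k)) conj(u₂(·,k)). With w(x,k) = u₁'(x,k)/(i k u₁(x,k)) and r(x,k) = (1 − w(x,k))/(1 + w(x,k)), one has 1 − |R₂(k)|² = exp( − ∫_ℝ (i k q(y)/2) ( r(y,k) − conj(r(y,k)) ) dy ), where the exponent is a real number, equal to ∫_ℝ k q(y) Im r(y,k) dy. -/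
open MeasureTheory Filter Topology

noncomputable section

lemma ac_of_dist_le {X Y : Type*} [PseudoMetricSpace X] [PseudoMetricSpace Y] {f : ℝ → X}
    {g : ℝ → Y} {a b K : ℝ} (hg : AbsolutelyContinuousOnInterval g a b)
    (h : ∀ x ∈ Set.uIcc a b, ∀ y ∈ Set.uIcc a b, dist (f x) (f y) ≤ K * dist (g x) (g y)) :
    AbsolutelyContinuousOnInterval f a b := by
  unfold AbsolutelyContinuousOnInterval at hg ⊢
  refine squeeze_zero' ?_ ?_ (by simpa using hg.const_mul K)
  · exact Eventually.of_forall fun _ => Finset.sum_nonneg fun i hi => dist_nonneg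
  · rw [eventually_inf_principal]
    filter_upwards with E hE
    rw [Finset.mul_sum]
    refine Finset.sum_le_sum fun i hi => ?_
    exact h _ (hE.1 i hi).1 _ (hE.1 i hi).2

lemma ac_prim {f : ℝ → ℂ} {F : ℝ → ℂ} (hf : LocallyIntegrable f)
    (hF : ∀ a b, F b = F a + ∫ x in a..b, f x) (a b : ℝ) :
    AbsolutelyContinuousOnInterval F a b := by
  have hi : IntervalIntegrable f volume a b :=
    intervalIntegrable_iff.mpr
      ((hf.integrableOn_isCompact isCompact_uIcc).mono_set Set.uIoc_subset_uIcc)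
  have hre : IntervalIntegrable (fun x => (f x).re) volume a b := ⟨hi.1.re, hi.2.re⟩
  have him : IntervalIntegrable (fun x => (f x).im) volume a b := ⟨hi.1.im, hi.2.im⟩
  have ha : a ∈ Set.uIcc a b := Set.left_mem_uIcc
  have h1 := hre.absolutelyContinuousOnInterval_intervalIntegral ha
  have h2 := him.absolutelyContinuousOnInterval_intervalIntegral ha
  have h1' : AbsolutelyContinuousOnInterval
      (fun x => (((∫ t in a..x, (f t).re) : ℝ) : ℂ)) a b :=
    ac_of_dist_le (K := 1) h1 (fun x _ y _ => by
      rw [one_mul, Complex.dist_eq, ← Complex.ofReal_sub, Complex.norm_real, Real.dist_eq,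
        Real.norm_eq_abs])
  have h2' : AbsolutelyContinuousOnInterval
      (fun x => (((∫ t in a..x, (f t).im) : ℝ) : ℂ)) a b :=
    ac_of_dist_le (K := 1) h2 (fun x _ y _ => by
      rw [one_mul, Complex.dist_eq, ← Complex.ofReal_sub, Complex.norm_real, Real.dist_eq,
        Real.norm_eq_abs])
  have h3 := h1'.add (h2'.const_smul Complex.I)
  refine ac_of_dist_le (K := 1) h3 (fun x hx y hy => ?_)
  have key : ∀ x, F x - F a = (((∫ t in a..x, (f t).re) : ℝ) : ℂ) +
      Complex.I • (((∫ t in a..x, (f t).im) : ℝ) : ℂ) := by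
    intro x
    have hix : IntervalIntegrable f volume a x :=
      intervalIntegrable_iff.mpr
        ((hf.integrableOn_isCompact isCompact_uIcc).mono_set Set.uIoc_subset_uIcc)
    rw [hF a x, add_sub_cancel_left, smul_eq_mul, ← intervalIntegral.integral_ofReal,
      ← intervalIntegral.integral_ofReal, ← intervalIntegral.integral_const_mul,
      ← intervalIntegral.integral_add]
    · refine intervalIntegral.integral_congr fun t _ => ?_
      rw [mul_comm, Complex.re_add_im]
    · exact ⟨hix.1.re.ofReal, hix.2.re.ofReal⟩
    · exact IntervalIntegrable.const_mul ⟨hix.1.im.ofReal, hix.2.im.ofReal⟩ _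
  simp only [Pi.add_apply, ← key]
  simp [dist_eq_norm]

lemma prim_of_ac {f : ℝ → ℂ} {F : ℝ → ℂ} (hf : LocallyIntegrable f)
    (hF : ∀ a b, AbsolutelyContinuousOnInterval F a b)
    (hd : ∀ᵐ x, HasDerivAt F (f x) x) (a b : ℝ) :
    F b = F a + ∫ x in a..b, f x := by
  have hG : AbsolutelyContinuousOnInterval (fun x => ∫ t in a..x, f t) a b := by
    refine ac_prim hf (fun s t => ?_) a b
    have hi : ∀ s t, IntervalIntegrable f volume s t := fun s t =>
      intervalIntegrable_iff.mpr
        ((hf.integrableOn_isCompact isCompact_uIcc).mono_set Set.uIoc_subset_uIcc)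
    rw [intervalIntegral.integral_add_adjacent_intervals (hi _ _) (hi _ _)]
  obtain ⟨C, hC⟩ := ((hF a b).sub hG).const_of_ae_hasDerivAt_zero (by
    filter_upwards [hd, _root_.LocallyIntegrable.ae_hasDerivAt_integral hf] with x h1 h2 _
    simpa using h1.sub (h2 a))
  have e1 := hC a Set.left_mem_uIcc
  have e2 := hC b Set.right_mem_uIcc
  simp at e1 e2
  rw [e1, ← e2]; ring

lemma conv_of_prim {F f : ℝ → ℂ} {l : Filter ℝ} (hl : l = atTop ∨ l = atBot)
    (hF : ∀ a b, F b = F a + ∫ x in a..b, f x) (hf : LocallyIntegrable f)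
    {g : ℝ → ℝ} (hg : Integrable g) (hb : ∀ᶠ x in l, ‖f x‖ ≤ g x) :
    ∃ L, Tendsto F l (𝓝 L) := by
  rcases hl with rfl | rfl
  · obtain ⟨X, hX⟩ := eventually_atTop.1 hb
    have hi : IntegrableOn f (Set.Ioi X) := by
      refine Integrable.mono' hg.integrableOn hf.aestronglyMeasurable.restrict ?_
      filter_upwards [ae_restrict_mem measurableSet_Ioi] with x hx using hX x (le_of_lt hx)
    refine ⟨F X + ∫ x in Set.Ioi X, f x, ?_⟩
    refine Tendsto.congr (fun x => (hF X x).symm) ?_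
    exact tendsto_const_nhds.add (intervalIntegral_tendsto_integral_Ioi X hi tendsto_id)
  · obtain ⟨X, hX⟩ := eventually_atBot.1 hb
    have hi : IntegrableOn f (Set.Iic X) := by
      refine Integrable.mono' hg.integrableOn hf.aestronglyMeasurable.restrict ?_
      filter_upwards [ae_restrict_mem measurableSet_Iic] with x hx using hX x hx
    refine ⟨F X - ∫ x in Set.Iic X, f x, ?_⟩
    have : ∀ x, F X - ∫ t in x..X, f t = F x := fun x => by rw [hF x X]; ring
    refine Tendsto.congr this ?_
    exact tendsto_const_nhds.sub (intervalIntegral_tendsto_integral_Iic X hi tendsto_id)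

/-- Working form of the equation. -/
structure Sol (q : ℝ → ℝ) (k : ℝ) (u p : ℝ → ℂ) : Prop where
  hu : ∀ x, HasDerivAt u (p x) x
  hp : Continuous p
  ac : ∀ a b, AbsolutelyContinuousOnInterval p a b
  hd : ∀ᵐ x, HasDerivAt p (-((k : ℂ) ^ 2 * (1 - (q x : ℂ))) * u x) x

lemma Sol.cont {q : ℝ → ℝ} {k : ℝ} {u p : ℝ → ℂ} (h : Sol q k u p) : Continuous u :=
  continuous_iff_continuousAt.2 fun x => (h.hu x).continuousAt

lemma ac_of_hasDerivAt {u p : ℝ → ℂ} (h : ∀ x, HasDerivAt u (p x) x) (hp : Continuous p)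
    (a b : ℝ) : AbsolutelyContinuousOnInterval u a b := by
  refine ContDiffOn.absolutelyContinuousOnInterval (ContDiff.contDiffOn ?_)
  rw [contDiff_one_iff_deriv]
  refine ⟨fun x => (h x).differentiableAt, ?_⟩
  rwa [show deriv u = p from funext fun x => (h x).deriv]

lemma Sol.acu {q : ℝ → ℝ} {k : ℝ} {u p : ℝ → ℂ} (h : Sol q k u p) (a b : ℝ) :
    AbsolutelyContinuousOnInterval u a b := ac_of_hasDerivAt h.hu h.hp a b

lemma locInt_q_mul {q : ℝ → ℝ} (hq : Integrable q) {v : ℝ → ℂ} (hv : Continuous v) :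
    LocallyIntegrable (fun x => (q x : ℂ) * v x) := by
  have h : LocallyIntegrable (fun x => (q x : ℂ)) := hq.ofReal.locallyIntegrable
  rw [← locallyIntegrableOn_univ] at h ⊢
  exact h.mul_continuousOn hv.continuousOn isOpen_univ.isLocallyClosed

lemma Sol.conv {q : ℝ → ℝ} (hq : Integrable q) {k : ℝ} {u p : ℝ → ℂ} (h : Sol q k u p)
    {l : Filter ℝ} (hl : l = atTop ∨ l = atBot) (hb : ∀ᶠ x in l, ‖u x‖ ≤ 2)
    (κ : ℝ) (hκ : κ ^ 2 = k ^ 2) :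
    ∃ L, Tendsto (fun x : ℝ => Complex.exp (Complex.I * κ * x) * (Complex.I * κ * u x - p x))
      l (𝓝 L) := by
  have hκ' : (κ : ℂ) ^ 2 = (k : ℂ) ^ 2 := by exact_mod_cast hκ
  have he : ∀ x : ℝ, HasDerivAt (fun x : ℝ => Complex.exp (Complex.I * κ * x))
      (Complex.exp (Complex.I * κ * x) * (Complex.I * κ)) x := by
    intro x
    have := ((Complex.ofRealCLM.hasDerivAt (x := x)).const_mul (Complex.I * κ)).cexp
    simpa using this
  have hec : Continuous (fun x : ℝ => Complex.exp (Complex.I * κ * x)) := by fun_prop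
  have hn : ∀ x : ℝ, ‖Complex.exp (Complex.I * κ * x)‖ = 1 := by
    intro x
    rw [Complex.norm_exp]; simp
  have hf : LocallyIntegrable (fun x => (q x : ℂ) *
      (-(k : ℂ) ^ 2 * Complex.exp (Complex.I * κ * x) * u x)) :=
    locInt_q_mul hq (by have := h.cont; fun_prop)
  refine conv_of_prim (g := fun x => |q x| * (k ^ 2 * 2)) hl (prim_of_ac hf ?_ ?_) hf ?_ ?_
  · intro a b
    have h1 : AbsolutelyContinuousOnInterval (fun x : ℝ => Complex.exp (Complex.I * κ * x)) a b :=
      ac_of_hasDerivAt he (by fun_prop) a b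
    exact h1.smul (((h.acu a b).const_smul (Complex.I * (κ : ℂ))).sub (h.ac a b))
  · filter_upwards [h.hd] with x hx
    have := (he x).mul (((h.hu x).const_mul (Complex.I * (κ : ℂ))).sub hx)
    refine this.congr_deriv ?_
    simp only [Pi.sub_apply]
    have hI : Complex.I ^ 2 = -1 := Complex.I_sq
    linear_combination (Complex.exp (Complex.I * κ * x) * u x * κ ^ 2) * hI -
      (Complex.exp (Complex.I * κ * x) * u x) * hκ'
  · exact hq.abs.mul_const _
  · filter_upwards [hb] with x hx
    rw [norm_mul, norm_mul, norm_mul, hn, Complex.norm_real, norm_neg, norm_pow,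
      Complex.norm_real, Real.norm_eq_abs, Real.norm_eq_abs, sq_abs, mul_one]
    gcongr

lemma Sol.asymp {q : ℝ → ℝ} (hq : Integrable q) {k : ℝ} (hk : k ≠ 0) {u p : ℝ → ℂ}
    (h : Sol q k u p) {l : Filter ℝ} (hl : l = atTop ∨ l = atBot)
    (hu : Tendsto (fun x : ℝ => Complex.exp (-(Complex.I * k * x)) * u x) l (𝓝 1)) :
    Tendsto (fun x => p x - Complex.I * k * u x) l (𝓝 0) ∧
    Tendsto (fun x => ‖u x‖) l (𝓝 1) := by
  have hne : l.NeBot := by rcases hl with rfl | rfl <;> infer_instance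
  have hnu : Tendsto (fun x => ‖u x‖) l (𝓝 1) := by
    have := hu.norm
    simp only [norm_one] at this
    refine this.congr fun x => ?_
    rw [norm_mul, Complex.norm_exp]; simp
  have hb : ∀ᶠ x in l, ‖u x‖ ≤ 2 := hnu.eventually_le_const (by norm_num)
  refine ⟨?_, hnu⟩
  obtain ⟨β, hβ⟩ := h.conv hq hl hb k rfl
  obtain ⟨α, hα⟩ := h.conv hq hl hb (-k) (by ring)
  -- the oscillating part converges
  have hosc : Tendsto (fun x : ℝ => Complex.exp (-(2 * Complex.I * k * x)) * β) l
      (𝓝 (2 * Complex.I * k * 1 + α)) := by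
    have h0 : Tendsto (fun x : ℝ => Complex.exp (-(2 * Complex.I * k * x)) *
        (β - Complex.exp (Complex.I * k * x) * (Complex.I * k * u x - p x))) l (𝓝 0) := by
      rw [tendsto_zero_iff_norm_tendsto_zero]
      have h1 : Tendsto (fun x : ℝ =>
          ‖β - Complex.exp (Complex.I * k * x) * (Complex.I * k * u x - p x)‖) l (𝓝 0) := by
        have := (tendsto_const_nhds (x := β)).sub hβ
        rw [sub_self] at this
        simpa using this.norm
      refine h1.congr fun x => ?_
      rw [norm_mul, Complex.norm_exp]; simp
    have h2 := h0.add ((hu.const_mul (2 * Complex.I * k)).add hα)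
    rw [zero_add] at h2
    refine h2.congr fun x => ?_
    have e1 : Complex.exp (-(2 * Complex.I * k * x)) =
      Complex.exp (-(Complex.I * k * x)) * Complex.exp (-(Complex.I * k * x)) := by
      rw [← Complex.exp_add]; ring_nf
    have e2 : Complex.exp (-(Complex.I * k * x)) * Complex.exp (Complex.I * k * x) = 1 := by
      rw [← Complex.exp_add]; simp
    have e3 : Complex.exp (Complex.I * ((-k : ℝ) : ℂ) * x) = Complex.exp (-(Complex.I * k * x)) := by
      push_cast; ring_nf
    rw [e1, e3]
    push_cast
    linear_combination (-(Complex.exp (-(Complex.I * k * x))) * (Complex.I * k * u x - p x)) * e2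
  have hshift : Tendsto (fun x : ℝ => x + Real.pi / (2 * k)) l l := by
    rcases hl with rfl | rfl
    · exact tendsto_atTop_add_const_right _ _ tendsto_id
    · exact tendsto_atBot_add_const_right _ _ tendsto_id
  have hosc2 := hosc.comp hshift
  have hkc : (k : ℂ) ≠ 0 := by exact_mod_cast hk
  have hneg : Tendsto (fun x : ℝ => Complex.exp (-(2 * Complex.I * k * x)) * β) l
      (𝓝 (-(2 * Complex.I * k * 1 + α))) := by
    refine hosc2.neg.congr fun x => ?_
    have : Complex.exp (-(2 * Complex.I * k * ((x + Real.pi / (2 * k) : ℝ) : ℂ))) =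
        - Complex.exp (-(2 * Complex.I * k * x)) := by
      have e : -(2 * Complex.I * k * ((x + Real.pi / (2 * k) : ℝ) : ℂ)) =
          -(2 * Complex.I * k * x) - Real.pi * Complex.I := by
        push_cast; field_simp; ring
      rw [e, Complex.exp_sub, Complex.exp_pi_mul_I, div_neg, div_one]
    simp only [Function.comp, this]; ring
  have hz : (2 * Complex.I * k * 1 + α) = 0 := by
    have := tendsto_nhds_unique hosc hneg
    exact self_eq_neg.mp this
  have hβ0 : β = 0 := by
    rw [hz] at hosc
    have h1 : Tendsto (fun x : ℝ => ‖β‖) l (𝓝 0) := by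
      have := hosc.norm
      rw [norm_zero] at this
      refine this.congr fun x => ?_
      rw [norm_mul, Complex.norm_exp]; simp
    simpa using tendsto_nhds_unique tendsto_const_nhds h1
  rw [hβ0] at hβ
  rw [tendsto_zero_iff_norm_tendsto_zero] at hβ ⊢
  refine hβ.congr fun x => ?_
  rw [norm_mul, Complex.norm_exp, norm_sub_rev]; simp

lemma hasDerivAt_conj {u : ℝ → ℂ} {u' : ℂ} {x : ℝ} (h : HasDerivAt u u' x) :
    HasDerivAt (fun x => (starRingEnd ℂ) (u x)) ((starRingEnd ℂ) u') x := h.star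

lemma ac_conj {u : ℝ → ℂ} {a b : ℝ} (h : AbsolutelyContinuousOnInterval u a b) :
    AbsolutelyContinuousOnInterval (fun x => (starRingEnd ℂ) (u x)) a b :=
  ac_of_dist_le (K := 1) h fun x _ y _ => by
    rw [one_mul, Complex.dist_conj_conj]

lemma Sol.wronskian {q : ℝ → ℝ} (hq : Integrable q) {k : ℝ} (hk : k ≠ 0) {u p : ℝ → ℂ}
    (h : Sol q k u p) {l : Filter ℝ} (hl : l = atTop ∨ l = atBot)
    (hu : Tendsto (fun x : ℝ => Complex.exp (-(Complex.I * k * x)) * u x) l (𝓝 1)) (x : ℝ) :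
    (starRingEnd ℂ) (u x) * p x - u x * (starRingEnd ℂ) (p x) = 2 * Complex.I * k := by
  have hne : l.NeBot := by rcases hl with rfl | rfl <;> infer_instance
  obtain ⟨h1, h2⟩ := h.asymp hq hk hl hu
  set W : ℝ → ℂ := fun x => (starRingEnd ℂ) (u x) * p x - u x * (starRingEnd ℂ) (p x) with hW
  have hac : ∀ a b, AbsolutelyContinuousOnInterval W a b := fun a b =>
    ((ac_conj (h.acu a b)).smul (h.ac a b)).sub ((h.acu a b).smul (ac_conj (h.ac a b)))
  have hconst : ∀ y, W y = W x := by
    intro y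
    have := prim_of_ac (f := fun _ => 0) locallyIntegrable_zero hac (by
      filter_upwards [h.hd] with t ht
      have := ((hasDerivAt_conj (h.hu t)).mul ht).sub ((h.hu t).mul (hasDerivAt_conj ht))
      refine this.congr_deriv ?_
      simp only [map_mul, map_neg, map_sub, map_pow, Complex.conj_ofReal, map_one]
      ring) x y
    simpa using this
  have hlim : Tendsto W l (𝓝 (2 * Complex.I * k)) := by
    have h3 : Tendsto (fun x => (starRingEnd ℂ) (u x) * (p x - Complex.I * k * u x)) l (𝓝 0) := by
      rw [tendsto_zero_iff_norm_tendsto_zero]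
      have := h2.mul h1.norm
      simpa using this
    have h4 : Tendsto (fun x => (starRingEnd ℂ)
        ((starRingEnd ℂ) (u x) * (p x - Complex.I * k * u x))) l (𝓝 0) := by
      rw [tendsto_zero_iff_norm_tendsto_zero] at h3 ⊢
      simpa only [RCLike.norm_conj] using h3
    have h5 : Tendsto (fun x => 2 * Complex.I * k * ((‖u x‖ : ℂ) ^ 2)) l
        (𝓝 (2 * Complex.I * k * ((1 : ℝ) : ℂ) ^ 2)) :=
      (((Complex.continuous_ofReal.tendsto _).comp h2).pow 2).const_mul _
    have h6 := (h3.sub h4).add h5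
    simp only [sub_self, zero_add, Complex.ofReal_one, one_pow, mul_one] at h6
    refine h6.congr fun x => ?_
    rw [← Complex.conj_mul']
    simp only [hW, map_mul, map_sub, Complex.conj_conj, Complex.conj_I, Complex.conj_ofReal]
    ring
  have : Tendsto W l (𝓝 (W x)) := by
    refine tendsto_const_nhds.congr fun y => (hconst y).symm
  exact tendsto_nhds_unique this hlim

lemma q_integrable {c : ℝ → ℝ} (hmeas : Measurable c) (h1 : HypH1 c) (h2 : HypH2 c) :
    Integrable (qfun c) := by
  obtain ⟨c₀, hc₀, cM, hcM, h1⟩ := h1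
  obtain ⟨C, hC, δ, hδ, h2⟩ := h2
  have hi : Integrable (fun x : ℝ => (1 + x ^ 2) ^ (-(1 + δ) / 2)) := by
    have := integrable_rpow_neg_one_add_norm_sq (E := ℝ) (μ := volume) (r := 1 + δ)
      (by simpa using hδ)
    simpa using this
  refine Integrable.mono' (hi.const_mul ((cM + 1) / c₀ ^ 2 * C)) ?_ ?_
  · unfold qfun
    exact (by fun_prop : Measurable fun x => 1 - 1 / (c x) ^ 2).aestronglyMeasurable
  · filter_upwards [h1, h2] with x hx hx2
    have hc : 0 < c x := hc₀.trans hx.1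
    have e : qfun c x = (c x + 1) / c x ^ 2 * (c x - 1) := by
      unfold qfun; field_simp; ring
    rw [e, norm_mul, Real.norm_eq_abs, Real.norm_eq_abs, abs_of_pos (by positivity), mul_assoc]
    have := hx.1.le
    have := hx.2
    gcongr

lemma sol_of_solves {c : ℝ → ℝ} (hq : Integrable (qfun c)) {k : ℝ} {u : ℝ → ℂ}
    (h : SolvesHelmholtz c k u) : Sol (qfun c) k u (deriv u) := by
  obtain ⟨hc, hs⟩ := h
  have hcont : Continuous u := hc.continuous
  rw [contDiff_one_iff_deriv] at hc
  have hf : LocallyIntegrable (fun x => -((k : ℂ) ^ 2 * (1 - (qfun c x : ℂ))) * u x) := by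
    have a1 := locInt_q_mul hq (v := fun x => (k : ℂ) ^ 2 * u x) (by fun_prop)
    have a2 : LocallyIntegrable (fun x => -(k : ℂ) ^ 2 * u x) :=
      (by fun_prop : Continuous _).locallyIntegrable
    refine (a1.add a2).congr (Eventually.of_forall fun x => ?_)
    simp only [Pi.add_apply]; ring
  have hs' : ∀ a b : ℝ, deriv u b = deriv u a +
      ∫ x in a..b, -((k : ℂ) ^ 2 * (1 - (qfun c x : ℂ))) * u x := by
    intro a b
    rw [hs a b]
    congr 1
    refine intervalIntegral.integral_congr fun x _ => ?_
    simp only [qfun]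
    push_cast
    ring
  refine ⟨fun x => (hc.1 x).hasDerivAt, hc.2, ac_prim hf hs', ?_⟩
  filter_upwards [_root_.LocallyIntegrable.ae_hasDerivAt_integral hf] with x hx
  have := (hx 0).const_add (deriv u 0)
  exact this.congr_of_eventuallyEq (Eventually.of_forall fun y => hs' 0 y)

lemma abs_log_sub_le {m x y : ℝ} (hm : 0 < m) (hx : m ≤ x) (hy : m ≤ y) :
    |Real.log x - Real.log y| ≤ m⁻¹ * |x - y| := by
  have key : ∀ x y : ℝ, m ≤ x → m ≤ y → Real.log x - Real.log y ≤ m⁻¹ * |x - y| := by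
    intro x y hx hy
    have hx0 := hm.trans_le hx
    have hy0 := hm.trans_le hy
    rw [← Real.log_div hx0.ne' hy0.ne']
    have h1 := Real.log_le_sub_one_of_pos (div_pos hx0 hy0)
    have h2 : x / y - 1 = y⁻¹ * (x - y) := by field_simp
    have h3 : y⁻¹ * (x - y) ≤ y⁻¹ * |x - y| := by gcongr; exact le_abs_self _
    have h4 : y⁻¹ * |x - y| ≤ m⁻¹ * |x - y| := by gcongr
    linarith
  rw [abs_le]
  constructor
  · have := key y x hy hx
    rw [abs_sub_comm] at this
    linarith
  · exact key x y hx hy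

lemma normSq_identity (k : ℝ) (u p : ℂ)
    (hW : (starRingEnd ℂ) u * p - u * (starRingEnd ℂ) p = 2 * Complex.I * k) :
    ‖Complex.I * k * u + p‖ ^ 2 = 4 * k ^ 2 + ‖Complex.I * k * u - p‖ ^ 2 := by
  have : ((‖Complex.I * k * u + p‖ ^ 2 : ℝ) : ℂ) =
      ((4 * k ^ 2 + ‖Complex.I * k * u - p‖ ^ 2 : ℝ) : ℂ) := by
    push_cast
    rw [← Complex.conj_mul', ← Complex.conj_mul']
    simp only [map_add, map_sub, map_mul, Complex.conj_I, Complex.conj_ofReal]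
    have hI : Complex.I ^ 2 = -1 := Complex.I_sq
    linear_combination (-2 * Complex.I * k) * hW - 4 * k ^ 2 * hI
  exact_mod_cast this

lemma log_formula {q : ℝ → ℝ} (hq : Integrable q) {k : ℝ} (hk : k ≠ 0) {u p : ℝ → ℂ}
    (h : Sol q k u p)
    (hW : ∀ x, (starRingEnd ℂ) (u x) * p x - u x * (starRingEnd ℂ) (p x) = 2 * Complex.I * k) :
    Integrable (fun x => k * q x *
      ((Complex.I * k * u x - p x) / (Complex.I * k * u x + p x)).im) ∧
    ∀ a b, Real.log (‖Complex.I * k * u b + p b‖ ^ 2) =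
      Real.log (‖Complex.I * k * u a + p a‖ ^ 2) + ∫ x in a..b, k * q x *
      ((Complex.I * k * u x - p x) / (Complex.I * k * u x + p x)).im := by
  set A : ℝ → ℂ := fun x => Complex.I * k * u x + p x with hA
  set B : ℝ → ℂ := fun x => Complex.I * k * u x - p x with hB
  have hcu := h.cont
  have hcp := h.hp
  have hid : ∀ x, ‖A x‖ ^ 2 = 4 * k ^ 2 + ‖B x‖ ^ 2 := fun x => normSq_identity k _ _ (hW x)
  have hk2 : 0 < 4 * k ^ 2 := by positivity
  have hlow : ∀ x, 4 * k ^ 2 ≤ ‖A x‖ ^ 2 := fun x => by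
    rw [hid]; linarith [sq_nonneg ‖B x‖]
  have hA0 : ∀ x, A x ≠ 0 := by
    intro x hx
    have := hlow x
    rw [hx] at this
    simp at this
    linarith
  have hcA : Continuous A := by fun_prop
  have hcB : Continuous B := by fun_prop
  have hcr : Continuous (fun x => (B x / A x).im) :=
    Complex.continuous_im.comp (hcB.div hcA hA0)
  have hr1 : ∀ x, |(B x / A x).im| ≤ 1 := by
    intro x
    refine (Complex.abs_im_le_norm _).trans ?_
    rw [norm_div, div_le_one (norm_pos_iff.2 (hA0 x))]
    refine le_of_sq_le_sq ?_ (norm_nonneg _)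
    rw [hid]; linarith
  have hint : Integrable (fun x => k * q x * (B x / A x).im) := by
    refine Integrable.mono' (hq.abs.const_mul |k|) ?_ (Eventually.of_forall fun x => ?_)
    · exact (hq.aestronglyMeasurable.const_mul k).mul hcr.aestronglyMeasurable
    · rw [Real.norm_eq_abs, abs_mul, abs_mul]
      exact mul_le_of_le_one_right (by positivity) (hr1 x)
  refine ⟨hint, fun a b => ?_⟩
  have hacA : ∀ a b, AbsolutelyContinuousOnInterval A a b := fun a b =>
    ((h.acu a b).const_smul (Complex.I * (k : ℂ))).add (h.ac a b)
  have hacN : ∀ a b, AbsolutelyContinuousOnInterval (fun x => ‖A x‖ ^ 2) a b := fun a b => by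
    refine ac_of_dist_le (K := 1) ((ac_conj (hacA a b)).smul (hacA a b)) fun x _ y _ => ?_
    simp only [Pi.smul_apply', smul_eq_mul, Complex.conj_mul', one_mul]
    rw [Complex.dist_eq, Real.dist_eq, ← Real.norm_eq_abs, ← Complex.norm_real]
    push_cast
    exact le_rfl
  have hacL : ∀ a b, AbsolutelyContinuousOnInterval (fun x => Real.log (‖A x‖ ^ 2)) a b :=
    fun a b => ac_of_dist_le (K := (4 * k ^ 2)⁻¹) (hacN a b) fun x _ y _ =>
      abs_log_sub_le hk2 (hlow x) (hlow y)
  have hacLC : ∀ a b, AbsolutelyContinuousOnInterval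
      (fun x => ((Real.log (‖A x‖ ^ 2) : ℝ) : ℂ)) a b := fun a b =>
    ac_of_dist_le (K := 1) (hacL a b) (fun x _ y _ => by
      rw [one_mul, Complex.dist_eq, ← Complex.ofReal_sub, Complex.norm_real, Real.dist_eq,
        Real.norm_eq_abs])
  have hder : ∀ᵐ x, HasDerivAt (fun x => ((Real.log (‖A x‖ ^ 2) : ℝ) : ℂ))
      ((k * q x * (B x / A x).im : ℝ) : ℂ) x := by
    filter_upwards [h.hd] with x hx
    have hdA : HasDerivAt A (Complex.I * k * p x + -((k : ℂ) ^ 2 * (1 - (q x : ℂ))) * u x) x :=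
      ((h.hu x).const_mul (Complex.I * (k : ℂ))).add hx
    set A' := Complex.I * k * p x + -((k : ℂ) ^ 2 * (1 - (q x : ℂ))) * u x with hA'
    have hN : HasDerivAt (fun x => ‖A x‖ ^ 2)
        ((starRingEnd ℂ) A' * A x + (starRingEnd ℂ) (A x) * A').re x := by
      have h1 := (hasDerivAt_conj hdA).mul hdA
      have h2 := (Complex.reCLM.hasFDerivAt.comp_hasDerivAt x h1)
      refine h2.congr_of_eventuallyEq (Eventually.of_forall fun y => ?_)
      simp only [Function.comp, Pi.mul_apply, Complex.conj_mul', Complex.reCLM_apply]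
      norm_cast
    have hL := (hN.log (by have := hlow x; linarith)).ofReal_comp
    refine hL.congr_deriv ?_
    congr 1
    have hne := hA0 x
    have hnn : ‖A x‖ ^ 2 ≠ 0 := by have := hlow x; linarith
    have e0 : A' = Complex.I * k * A x - Complex.I * k * q x / 2 * (A x + B x) := by
      simp only [hA', hA, hB]
      have hI : Complex.I ^ 2 = -1 := Complex.I_sq
      linear_combination (-(k : ℂ) ^ 2 * u x * (1 - q x)) * hI
    have e1 : (starRingEnd ℂ) (A x) * A' = (‖A x‖ ^ 2 : ℝ) *
        (Complex.I * k - Complex.I * k * q x / 2 * (1 + B x / A x)) := by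
      push_cast
      rw [e0, ← Complex.conj_mul']
      field_simp
    have e2 : ((starRingEnd ℂ) A' * A x + (starRingEnd ℂ) (A x) * A').re =
        2 * ((starRingEnd ℂ) (A x) * A').re := by
      simp only [Complex.add_re, Complex.mul_re, Complex.conj_re, Complex.conj_im]; ring
    rw [e2, e1, Complex.re_ofReal_mul, div_eq_iff hnn]
    have e3 : (Complex.I * k - Complex.I * k * q x / 2 * (1 + B x / A x)).re =
        k * q x / 2 * (B x / A x).im := by
      generalize B x / A x = r
      have : Complex.I * k * q x / 2 * (1 + r) =
        ((k * q x / 2 : ℝ) : ℂ) * (Complex.I * (1 + r)) := by push_cast; ring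
      rw [this, Complex.sub_re, Complex.re_ofReal_mul]
      simp
    rw [e3]; ring
  have := prim_of_ac hint.ofReal.locallyIntegrable hacLC hder a b
  have hio := intervalIntegral.integral_ofReal (a := a) (b := b) (μ := volume)
    (f := fun x => k * q x * (B x / A x).im)
  erw [hio] at this
  exact_mod_cast this

/-- `1 - |R₂(k)|² = exp(-∫ (ikq/2)(r - conj r))`, the exponent being the real number
`∫ k q Im r`. -/
theorem one_sub_R2_sq (c : ℝ → ℝ) (hmeas : Measurable c)
    (h1 : HypH1 c) (h2 : HypH2 c) (k : ℝ) (hk : k ≠ 0)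
    (u₁ u₂ : ℝ → ℂ) (hu₁ : IsJostPlus c (k : ℂ) u₁) (hu₂ : IsJostMinus c (k : ℂ) u₂)
    (T R₂ : ℂ) (hT : T ≠ 0)
    (hrel : ∀ x : ℝ, u₁ x = (R₂ / T) * u₂ x + (1 / T) * (starRingEnd ℂ) (u₂ x)) :
    (((1 - ‖R₂‖ ^ 2 : ℝ)) : ℂ) =
      Complex.exp (-∫ y : ℝ, (Complex.I * (k : ℂ) * ((qfun c y : ℝ) : ℂ) / 2) *
        (rJost (k : ℂ) u₁ y - (starRingEnd ℂ) (rJost (k : ℂ) u₁ y))) ∧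
    (-∫ y : ℝ, (Complex.I * (k : ℂ) * ((qfun c y : ℝ) : ℂ) / 2) *
        (rJost (k : ℂ) u₁ y - (starRingEnd ℂ) (rJost (k : ℂ) u₁ y))) =
      (((∫ y : ℝ, k * qfun c y * (rJost (k : ℂ) u₁ y).im : ℝ)) : ℂ) := by
  have hexp : (-∫ y : ℝ, (Complex.I * (k : ℂ) * ((qfun c y : ℝ) : ℂ) / 2) *
        (rJost (k : ℂ) u₁ y - (starRingEnd ℂ) (rJost (k : ℂ) u₁ y))) =
      (((∫ y : ℝ, k * qfun c y * (rJost (k : ℂ) u₁ y).im : ℝ)) : ℂ) := by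
    rw [← integral_complex_ofReal, ← integral_neg]
    congr 1
    funext y
    rw [Complex.sub_conj]
    push_cast
    have hI : Complex.I ^ 2 = -1 := Complex.I_sq
    linear_combination (-(k : ℂ) * qfun c y * ((rJost (k : ℂ) u₁ y).im : ℂ)) * hI
  refine ⟨?_, hexp⟩
  rw [hexp]
  have hkc : (k : ℂ) ≠ 0 := by exact_mod_cast hk
  have hq := q_integrable hmeas h1 h2
  have s1 := sol_of_solves hq hu₁.1
  have s2 : Sol (qfun c) (-k) u₂ (deriv u₂) := by
    have s := sol_of_solves hq hu₂.1
    refine ⟨s.hu, s.hp, s.ac, ?_⟩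
    simpa using s.hd
  have t2 : Tendsto (fun x : ℝ => Complex.exp (-(Complex.I * ((-k : ℝ) : ℂ) * x)) * u₂ x) atBot
      (𝓝 1) := by
    simpa using hu₂.2
  have W1 := s1.wronskian hq hk (Or.inl rfl) hu₁.2
  have W2 := s2.wronskian hq (neg_ne_zero.2 hk) (Or.inr rfl) t2
  obtain ⟨a1, n1⟩ := s1.asymp hq hk (Or.inl rfl) hu₁.2
  obtain ⟨a2, n2⟩ := s2.asymp hq (neg_ne_zero.2 hk) (Or.inr rfl) t2
  have hrel' : ∀ x, deriv u₁ x = (R₂ / T) * deriv u₂ x +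
      (1 / T) * (starRingEnd ℂ) (deriv u₂ x) := by
    intro x
    have := ((s2.hu x).const_mul (R₂ / T)).add ((hasDerivAt_conj (s2.hu x)).const_mul (1 / T))
    rw [show u₁ = _ from funext hrel]
    exact this.deriv
  have hTn : 0 < ‖T‖ ^ 2 := by positivity
  -- unitarity
  have hunit : 1 - ‖R₂‖ ^ 2 = ‖T‖ ^ 2 := by
    have w1 := W1 0
    have w2 := W2 0
    rw [hrel 0, hrel' 0] at w1
    simp only [map_add, map_mul, map_div₀, map_one, Complex.conj_conj] at w1
    have hTc : (starRingEnd ℂ) T ≠ 0 := by simpa using hT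
    push_cast at w2
    have : (1 - (starRingEnd ℂ) R₂ * R₂) = (starRingEnd ℂ) T * T := by
      have h2k : 2 * Complex.I * (k : ℂ) ≠ 0 := by simp [hk]
      apply mul_left_cancel₀ h2k
      field_simp at w1
      linear_combination w1 + ((starRingEnd ℂ) R₂ * R₂ - 1) * (-w2)
    rw [Complex.conj_mul', Complex.conj_mul'] at this
    exact_mod_cast this
  -- identify r
  have hr : ∀ y, rJost (k : ℂ) u₁ y =
      (Complex.I * k * u₁ y - deriv u₁ y) / (Complex.I * k * u₁ y + deriv u₁ y) := by
    intro y
    have hu0 : u₁ y ≠ 0 := by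
      intro h0
      have := W1 y
      rw [h0] at this
      simp [hk] at this
    have hd : Complex.I * k * u₁ y ≠ 0 := by simp [hk, hu0]
    unfold rJost wJost
    rw [if_neg hkc, one_sub_div hd, one_add_div hd, div_div_div_cancel_right₀ hd]
  simp only [hr]
  obtain ⟨hint, hlog⟩ := log_formula hq hk s1 W1
  have hk2 : 0 < 4 * k ^ 2 := by positivity
  have lim1 : Tendsto (fun x => ‖Complex.I * k * u₁ x + deriv u₁ x‖ ^ 2) atTop
      (𝓝 (4 * k ^ 2)) := by
    have hz : Tendsto (fun x => 4 * k ^ 2 + ‖Complex.I * k * u₁ x - deriv u₁ x‖ ^ 2) atTop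
        (𝓝 (4 * k ^ 2 + 0 ^ 2)) := by
      refine tendsto_const_nhds.add (Tendsto.pow ?_ 2)
      have := a1.norm
      rw [norm_zero] at this
      exact this.congr fun x => norm_sub_rev _ _
    rw [zero_pow two_ne_zero, add_zero] at hz
    exact hz.congr fun x => (normSq_identity k _ _ (W1 x)).symm
  have lim2 : Tendsto (fun x => ‖Complex.I * k * u₁ x + deriv u₁ x‖ ^ 2) atBot
      (𝓝 (4 * k ^ 2 / ‖T‖ ^ 2)) := by
    -- the two pieces
    have hz : Tendsto (fun x => ‖Complex.I * k * u₁ x - R₂ / T * 0 + deriv u₁ x‖) atBot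
        (𝓝 (2 * |k| / ‖T‖)) := by
      have z1 : Tendsto (fun x => (R₂ / T) * (deriv u₂ x - Complex.I * ((-k : ℝ) : ℂ) * u₂ x) +
          (1 / T) * (starRingEnd ℂ) (deriv u₂ x - Complex.I * ((-k : ℝ) : ℂ) * u₂ x)) atBot
          (𝓝 0) := by
        have c1 := a2.const_mul (R₂ / T)
        have c2 := (((Complex.continuous_conj.tendsto _).comp a2).const_mul (1 / T))
        have := c1.add c2
        simpa using this
      have z2 : Tendsto (fun x => ‖(1 / T) * (2 * Complex.I * k *
          (starRingEnd ℂ) (u₂ x))‖) atBot (𝓝 (2 * |k| / ‖T‖)) := by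
        have := n2.const_mul (2 * |k| / ‖T‖)
        rw [mul_one] at this
        refine this.congr fun x => ?_
        simp only [norm_mul, norm_div, RCLike.norm_conj, Complex.norm_I, Complex.norm_real,
          norm_one, Real.norm_eq_abs, Complex.norm_two]
        ring
      have z3 := z1.norm
      rw [norm_zero] at z3
      rw [tendsto_iff_dist_tendsto_zero] at z2 ⊢
      have z4 := z3.add z2
      rw [zero_add] at z4
      refine squeeze_zero (fun _ => dist_nonneg) (fun x => ?_) z4
      refine (dist_triangle _ _ _).trans (add_le_add ?_ le_rfl)
      rw [Real.dist_eq]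
      refine (abs_norm_sub_norm_le _ _).trans (le_of_eq ?_)
      congr 1
      rw [hrel x, hrel' x]
      simp only [map_sub, map_mul, Complex.conj_I, Complex.conj_ofReal]
      push_cast
      ring
    have := hz.pow 2
    rw [div_pow, mul_pow, sq_abs] at this
    norm_num at this
    exact this
  have L1 := lim1.log hk2.ne'
  have L2 := lim2.log (by positivity)
  have L3 := intervalIntegral_tendsto_integral hint
    (tendsto_neg_atTop_atBot (G := ℝ)) (tendsto_id (α := ℝ) (x := atTop))
  have L4 := L1.sub (L2.comp (tendsto_neg_atTop_atBot (G := ℝ)))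
  have L5 := tendsto_nhds_unique L3 (L4.congr fun x => by
    simp only [Function.comp, id]
    rw [hlog (-x) x]; ring)
  rw [L5, Real.log_div hk2.ne' hTn.ne', sub_sub_cancel, ← Complex.ofReal_exp,
    Real.exp_log hTn, hunit]
end
end

section
/- Let c satisfy [H1] and [H2]. For κ > 0 let u₁(·,iκ) be the real-valued Jost solution from +∞ at k = iκ, set w(x,iκ) = −u₁'(x,iκ)/(κ u₁(x,iκ)) and r(x,iκ) = (1 − w(x,iκ))/(1 + w(x,iκ)). Then ∫_ℝ | q(x) r(x,iκ) − Q(x)² | dx → 0 as κ → +∞, where q = 1 − 1/c² and Q = 1 − 1/c. -/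
open MeasureTheory Filter Topology

noncomputable section

/-- `w(x, iκ) = -u₁'(x, iκ)/(κ u₁(x, iκ))` built from a family of real Jost solutions. -/
def wIK (U : ℝ → ℝ → ℝ) (κ x : ℝ) : ℝ := -(deriv (U κ) x) / (κ * U κ x)

/-- `r(x, iκ) = (1 - w(x,iκ))/(1 + w(x,iκ))`. -/
def rIK (U : ℝ → ℝ → ℝ) (κ x : ℝ) : ℝ := (1 - wIK U κ x) / (1 + wIK U κ x)

/-- Deterministic trapping step for the Riccati equation. -/
lemma trap_step {κ m M α η x T : ℝ} {z W B : ℝ → ℝ} (hκ : 0 < κ) (hm : 0 < m) (hη : 0 < η)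
    (hT : 0 ≤ T) (hz : ∀ y, HasDerivAt z (κ * (W y ^ 2 - α ^ 2)) y)
    (hzW : ∀ y, z y = W y - α + κ * B y)
    (hB : ∀ y ∈ Set.Icc x (x + T), |κ * B y| ≤ η / 2)
    (hWm : ∀ y, m ≤ W y) (hWM : ∀ y, W y ≤ M) (hαm : m ≤ α) (hαM : α ≤ M)
    (hK : M ≤ κ * m * η * T / 4) (hzx : z x = W x - α) : |W x - α| ≤ η := by
  have hzc : Continuous z := continuous_iff_continuousAt.2 fun y => (hz y).continuousAt
  have hline : ∀ y, HasDerivAt (fun y => η + κ * m * (η / 4) * (y - x)) (κ * m * (η / 4)) y := by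
    intro y
    simpa using (((hasDerivAt_id y).sub_const x).const_mul (κ * m * (η / 4))).const_add η
  have hend : x + T ∈ Set.Icc x (x + T) := ⟨by linarith, le_rfl⟩
  have hp : 0 < κ * m * η := by positivity
  have hBe := abs_le.1 (hB _ hend)
  have hmono : ∀ y ∈ Set.Ico x (x + T), 0 ≤ κ * m * (η / 4) * (y - x) := by
    intro y hy
    exact mul_nonneg (by positivity) (by linarith [hy.1])
  rw [abs_le]
  constructor
  · by_contra hcon
    push Not at hcon
    have := image_le_of_deriv_right_lt_deriv_boundary (f := z)
      (f' := fun y => κ * (W y ^ 2 - α ^ 2)) (a := x) (b := x + T)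
      (B := fun y => -(η + κ * m * (η / 4) * (y - x))) (B' := fun y => -(κ * m * (η / 4)))
      hzc.continuousOn (fun y _ => (hz y).hasDerivWithinAt) (by simp; linarith)
      (fun y => (hline y).neg) (by
        intro y hy hyz
        have h1 := abs_le.1 (hB y ⟨hy.1, hy.2.le⟩)
        have h2 := hmono y hy
        have h3 := hzW y
        have h4 : W y - α ≤ -(η / 2) := by linarith
        have h5 : W y ^ 2 - α ^ 2 ≤ -(m * η) := by
          nlinarith [hWm y]
        show κ * (W y ^ 2 - α ^ 2) < -(κ * m * (η / 4))
        have := mul_le_mul_of_nonneg_left h5 hκ.le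
        nlinarith)
    have h := this hend
    have h3 := hzW (x + T)
    have := hWm (x + T)
    nlinarith
  · by_contra hcon
    push Not at hcon
    have := image_le_of_deriv_right_lt_deriv_boundary (f := fun y => - z y)
      (f' := fun y => -(κ * (W y ^ 2 - α ^ 2))) (a := x) (b := x + T)
      (B := fun y => -(η + κ * m * (η / 4) * (y - x))) (B' := fun y => -(κ * m * (η / 4)))
      hzc.neg.continuousOn (fun y _ => (hz y).neg.hasDerivWithinAt) (by simp; linarith)
      (fun y => (hline y).neg) (by
        intro y hy hyz
        have h1 := abs_le.1 (hB y ⟨hy.1, hy.2.le⟩)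
        have h2 := hmono y hy
        have h3 := hzW y
        have h4 : η / 2 ≤ W y - α := by linarith
        have h5 : m * η ≤ W y ^ 2 - α ^ 2 := by
          nlinarith [hWm y]
        show -(κ * (W y ^ 2 - α ^ 2)) < -(κ * m * (η / 4))
        have := mul_le_mul_of_nonneg_left h5 hκ.le
        nlinarith)
    have h := this hend
    have h3 := hzW (x + T)
    have := hWM (x + T)
    nlinarith

/-- Pointwise convergence of solutions of the Riccati equation at Lebesgue points. -/
lemma riccati_tendsto {A : ℝ → ℝ} (hA : ∀ a b, IntervalIntegrable A volume a b) {m M : ℝ}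
    (hm : 0 < m) {W : ℝ → ℝ → ℝ} (hWc : ∀ κ > 0, Continuous (W κ))
    (hWm : ∀ κ > 0, ∀ y, m ≤ W κ y) (hWM : ∀ κ > 0, ∀ y, W κ y ≤ M)
    (hR : ∀ κ > 0, ∀ a b, W κ b - W κ a = ∫ y in a..b, κ * (W κ y ^ 2 - A y))
    {x α : ℝ} (hαm : m ≤ α) (hαM : α ≤ M)
    (hx : HasDerivAt (fun y => ∫ t in (x)..y, A t) (α ^ 2) x) :
    Tendsto (fun κ => W κ x) atTop (𝓝 α) := by
  rw [Metric.tendsto_atTop]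
  intro η' hη'
  obtain ⟨η, hη, hηη⟩ : ∃ η, 0 < η ∧ η < η' := ⟨η' / 2, by linarith, by linarith⟩
  have hM : 0 < M := by linarith
  obtain ⟨K, hKdef⟩ : ∃ K, K = 4 * M / (m * η) := ⟨_, rfl⟩
  have hK : 0 < K := by rw [hKdef]; positivity
  have hKM : m * η * K / 4 = M := by rw [hKdef]; field_simp
  have hε : 0 < η / (2 * K) := by positivity
  have hlo := (hasDerivAt_iff_isLittleO.1 hx).bound hε
  rw [Metric.eventually_nhds_iff] at hlo
  obtain ⟨δ, hδ, hlo⟩ := hlo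
  refine ⟨K / δ + 1, fun κ hκ => ?_⟩
  have hκ0 : 0 < κ := by
    have : 0 < K / δ := by positivity
    linarith
  have hTδ : K / κ < δ := by
    rw [div_lt_iff₀ hκ0]
    have : K / δ < κ := by linarith
    rw [div_lt_iff₀ hδ] at this
    linarith
  rw [Real.dist_eq]
  refine lt_of_le_of_lt ?_ hηη
  have hWi : Continuous fun y => κ * (W κ y ^ 2 - α ^ 2) := by
    have := hWc κ hκ0
    fun_prop
  have hW2 : ∀ a b, IntervalIntegrable (fun y => W κ y ^ 2) volume a b := fun a b =>
    ((hWc κ hκ0).pow 2).intervalIntegrable a b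
  refine trap_step (κ := κ) (m := m) (M := M) (T := K / κ)
    (z := fun y => W κ x - α + ∫ t in (x)..y, κ * (W κ t ^ 2 - α ^ 2)) (W := W κ)
    (B := fun y => (∫ t in (x)..y, A t) - α ^ 2 * (y - x)) hκ0 hm hη (by positivity) ?_ ?_ ?_
    (hWm κ hκ0) (hWM κ hκ0) hαm hαM ?_ (by simp)
  · intro y
    exact (intervalIntegral.integral_hasDerivAt_right (hWi.intervalIntegrable _ _)
      hWi.stronglyMeasurable.stronglyMeasurableAtFilter hWi.continuousAt).const_add _
  · intro y
    have h1 := hR κ hκ0 x y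
    rw [intervalIntegral.integral_const_mul,
      intervalIntegral.integral_sub (hW2 _ _) (hA _ _)] at h1
    have h2 : ∫ t in (x)..y, κ * (W κ t ^ 2 - α ^ 2)
        = κ * ((∫ t in (x)..y, W κ t ^ 2) - α ^ 2 * (y - x)) := by
      rw [intervalIntegral.integral_const_mul,
        intervalIntegral.integral_sub (hW2 _ _) intervalIntegrable_const,
        intervalIntegral.integral_const, smul_eq_mul, mul_comm (α ^ 2)]
    simp only [h2]
    linarith
  · intro y hy
    have hyx : |y - x| ≤ K / κ := by
      rw [abs_le]; constructor
      · have : 0 < K / κ := by positivity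
        linarith [hy.1]
      · linarith [hy.2]
    have h := hlo (y := y) (by rw [Real.dist_eq]; linarith)
    simp only [intervalIntegral.integral_same, sub_zero, smul_eq_mul, Real.norm_eq_abs] at h
    rw [abs_mul, abs_of_pos hκ0, mul_comm (α ^ 2)]
    calc κ * |(∫ t in (x)..y, A t) - (y - x) * α ^ 2| ≤ κ * (η / (2 * K) * (K / κ)) := by
          gcongr
          exact h.trans (by gcongr)
      _ = η / 2 := by field_simp
  · have : κ * m * η * (K / κ) / 4 = m * η * K / 4 := by field_simp
    rw [this, hKM]

/-- A bounded function satisfying a growth inequality is nonpositive. -/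
lemma nonpos_of_growth {p : ℝ → ℝ} {l a C : ℝ} (hl : 0 < l) (hp : Continuous p)
    (hg : ∀ b, a ≤ b → p a + l * ∫ t in a..b, p t ≤ p b) (hC : ∀ b, a ≤ b → p b ≤ C) :
    p a ≤ 0 := by
  by_contra hpos
  push Not at hpos
  have hd : ∀ y, HasDerivAt (fun b => p a + l * ∫ t in a..b, p t) (l * p y) y := by
    intro y
    exact ((intervalIntegral.integral_hasDerivAt_right (hp.intervalIntegrable _ _)
      hp.stronglyMeasurable.stronglyMeasurableAtFilter hp.continuousAt).const_mul l).const_add _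
  have hlow : ∀ b, a ≤ b → p a + l * (p a / 2) * (b - a) ≤ p a + l * ∫ t in a..b, p t := by
    intro b hab
    have hline : ∀ y, HasDerivAt (fun y => p a + l * (p a / 2) * (y - a)) (l * (p a / 2)) y := by
      intro y
      simpa using (((hasDerivAt_id y).sub_const a).const_mul (l * (p a / 2))).const_add (p a)
    refine image_le_of_deriv_right_lt_deriv_boundary (a := a) (b := b)
      (fun y _ => (hline y).continuousAt.continuousWithinAt)
      (fun y _ => (hline y).hasDerivWithinAt) (by simp) hd ?_ ⟨hab, le_rfl⟩
    intro y hy heq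
    have h1 := hg y hy.1
    have h2 : 0 ≤ l * (p a / 2) * (y - a) := mul_nonneg (by positivity) (by linarith [hy.1])
    have h3 : p a / 2 < p y := by linarith
    exact mul_lt_mul_of_pos_left h3 hl
  have hCp : 0 ≤ C := by linarith [hC a le_rfl]
  have hq : 0 < l * (p a / 2) := by positivity
  have hb : a ≤ a + C / (l * (p a / 2)) := by
    have : 0 ≤ C / (l * (p a / 2)) := by positivity
    linarith
  have h1 := hlow _ hb
  have h2 := hg _ hb
  have h3 := hC _ hb
  have h4 : l * (p a / 2) * (a + C / (l * (p a / 2)) - a) = C := by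
    field_simp
    ring
  linarith

section Jost

variable {A u : ℝ → ℝ} {κ m M : ℝ}

lemma jost_II (hA : ∀ a b, IntervalIntegrable A volume a b) (hu : ContDiff ℝ 1 u) (a b : ℝ) :
    IntervalIntegrable (fun x => κ ^ 2 * A x * u x) volume a b :=
  ((hA a b).const_mul _).mul_continuousOn hu.continuous.continuousOn

/-- where `u ≥ 0` and `u → 0` at infinity, `u' ≤ 0` and `u'` is monotone. -/
lemma jost_convex (hA : ∀ a b, IntervalIntegrable A volume a b)
    (hA0 : ∀ᵐ x : ℝ, 0 ≤ A x) (hu : ContDiff ℝ 1 u)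
    (he : ∀ a b, deriv u b = deriv u a + ∫ x in a..b, κ ^ 2 * A x * u x)
    (h0 : Tendsto u atTop (𝓝 0)) {y₀ : ℝ} (hpos : ∀ y, y₀ < y → 0 ≤ u y) :
    (∀ a b, y₀ ≤ a → a ≤ b → deriv u a ≤ deriv u b) ∧ ∀ a, y₀ ≤ a → deriv u a ≤ 0 := by
  have hmono : ∀ a b, y₀ ≤ a → a ≤ b → deriv u a ≤ deriv u b := by
    intro a b ha hab
    rw [he a b]
    have : 0 ≤ ∫ x in a..b, κ ^ 2 * A x * u x := by
      rw [intervalIntegral.integral_of_le hab]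
      apply setIntegral_nonneg_of_ae_restrict
      filter_upwards [ae_restrict_mem measurableSet_Ioc, ae_restrict_of_ae hA0] with x hx hx2
      have := hpos x (by linarith [hx.1])
      simp only [Pi.zero_apply]
      positivity
    linarith
  refine ⟨hmono, fun a ha => ?_⟩
  by_contra hcon
  push Not at hcon
  have hdiff : Differentiable ℝ u := hu.differentiable (by norm_num)
  have hlow : ∀ b, a ≤ b → u a + deriv u a * (b - a) ≤ u b := by
    intro b hab
    have := Convex.mul_sub_le_image_sub_of_le_deriv (convex_Ici a) hdiff.continuous.continuousOn
      hdiff.differentiableOn (C := deriv u a) (by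
        intro x hx
        rw [interior_Ici] at hx
        exact hmono a x ha (le_of_lt hx)) a (by simp) b (by simpa using hab) hab
    linarith
  have htop : Tendsto (fun b => u a + deriv u a * (b - a)) atTop atTop := by
    apply tendsto_atTop_add_const_left
    apply Tendsto.const_mul_atTop hcon
    exact tendsto_atTop_add_const_right _ _ tendsto_id
  have : Tendsto u atTop atTop := by
    refine tendsto_atTop_mono' _ ?_ htop
    filter_upwards [eventually_ge_atTop a] with b hb using hlow b hb
  exact not_tendsto_nhds_of_tendsto_atTop this 0 h0

lemma jost_anti (hu : ContDiff ℝ 1 u) {y₀ : ℝ} (h : ∀ a, y₀ ≤ a → deriv u a ≤ 0) :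
    ∀ b, y₀ ≤ b → u b ≤ u y₀ := by
  intro b hb
  have hdiff : Differentiable ℝ u := hu.differentiable (by norm_num)
  have := antitoneOn_of_deriv_nonpos (convex_Ici y₀) hdiff.continuous.continuousOn
    hdiff.differentiableOn (by
      intro x hx
      rw [interior_Ici] at hx
      exact h x (le_of_lt hx))
  exact this (by simp) (by simpa using hb) hb

lemma jost_pos (hA : ∀ a b, IntervalIntegrable A volume a b)
    (hA0 : ∀ᵐ x : ℝ, 0 ≤ A x) (hu : ContDiff ℝ 1 u)
    (he : ∀ a b, deriv u b = deriv u a + ∫ x in a..b, κ ^ 2 * A x * u x)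
    (h0 : Tendsto u atTop (𝓝 0)) (hev : ∀ᶠ y in atTop, 0 < u y) : ∀ y, 0 < u y := by
  by_contra hcon
  push Not at hcon
  obtain ⟨y, hy⟩ := hcon
  obtain ⟨X, hX⟩ := eventually_atTop.1 hev
  have hbdd : BddAbove {y | u y ≤ 0} := ⟨X, fun z hz => by
    by_contra h
    push Not at h
    exact absurd (hX z h.le) (not_lt.2 hz)⟩
  have hcl : IsClosed {y | u y ≤ 0} := isClosed_le hu.continuous continuous_const
  have hmem : sSup {y | u y ≤ 0} ∈ {y | u y ≤ 0} := hcl.csSup_mem ⟨y, hy⟩ hbdd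
  have hgt : ∀ z, sSup {y | u y ≤ 0} < z → 0 < u z := by
    intro z hz
    by_contra h
    push Not at h
    exact absurd (le_csSup hbdd (show z ∈ {y | u y ≤ 0} from h)) (not_le.2 hz)
  have hc := jost_convex hA hA0 hu he h0 (fun z hz => (hgt z hz).le)
  have := jost_anti hu hc.2 (sSup {y | u y ≤ 0} + 1) (by linarith)
  have h2 := hgt (sSup {y | u y ≤ 0} + 1) (by linarith)
  have h3 : u (sSup {y | u y ≤ 0}) ≤ 0 := hmem
  linarith

lemma jost_bounds (hA : ∀ a b, IntervalIntegrable A volume a b) (hκ : 0 < κ) (hm : 0 < m)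
    (hM : 0 < M) (hAb : ∀ᵐ x : ℝ, m ^ 2 ≤ A x ∧ A x ≤ M ^ 2) (hu : ContDiff ℝ 1 u)
    (he : ∀ a b, deriv u b = deriv u a + ∫ x in a..b, κ ^ 2 * A x * u x)
    (h0 : Tendsto u atTop (𝓝 0)) (hpos : ∀ y, 0 < u y) (y : ℝ) :
    m ≤ -(deriv u y) / (κ * u y) ∧ -(deriv u y) / (κ * u y) ≤ M := by
  have hA0 : ∀ᵐ x : ℝ, 0 ≤ A x := by
    filter_upwards [hAb] with x hx
    exact le_trans (by positivity) hx.1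
  have hc := fun y₀ => jost_convex hA hA0 hu he h0 (y₀ := y₀) (fun z _ => (hpos z).le)
  have hdc : Continuous (deriv u) := hu.continuous_deriv (by norm_num)
  have huc := hu.continuous
  have hdiff : Differentiable ℝ u := hu.differentiable (by norm_num)
  have hint : ∀ a b, ∫ t in a..b, deriv u t = u b - u a := fun a b =>
    intervalIntegral.integral_deriv_eq_sub (fun x _ => hdiff x) (hdc.intervalIntegrable a b)
  have hlin : ∀ s a b, ∫ t in a..b, (deriv u t + s * u t)
      = (u b - u a) + s * ∫ t in a..b, u t := by
    intro s a b
    rw [intervalIntegral.integral_add (hdc.intervalIntegrable a b)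
      ((huc.intervalIntegrable a b).const_mul _), hint, intervalIntegral.integral_const_mul]
  have hanti := jost_anti hu (hc y).2
  have hden : 0 < κ * u y := mul_pos hκ (hpos y)
  constructor
  · have key := nonpos_of_growth (p := fun t => deriv u t + κ * m * u t) (l := κ * m) (a := y)
      (C := κ * m * u y) (by positivity) (by fun_prop) (by
        intro b hb
        rw [hlin, he y b]
        have : ∫ t in y..b, (κ * m) ^ 2 * u t ≤ ∫ t in y..b, κ ^ 2 * A t * u t := by
          apply intervalIntegral.integral_mono_ae hb
            ((huc.intervalIntegrable _ _).const_mul _) (jost_II hA hu _ _)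
          filter_upwards [hAb] with t ht
          have := hpos t
          rw [mul_pow]
          gcongr
          exact ht.1
        rw [intervalIntegral.integral_const_mul] at this
        nlinarith) (by
        intro b hb
        have h1 := (hc y).2 b hb
        have h2 := mul_le_mul_of_nonneg_left (hanti b hb) (by positivity : 0 ≤ κ * m)
        beta_reduce
        linarith)
    rw [le_div_iff₀ hden]
    beta_reduce at key
    linarith
  · have key := nonpos_of_growth (p := fun t => -(deriv u t + κ * M * u t)) (l := κ * M) (a := y)
      (C := -deriv u y) (by positivity) (by fun_prop) (by
        intro b hb
        rw [intervalIntegral.integral_neg, hlin, he y b]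
        have : ∫ t in y..b, κ ^ 2 * A t * u t ≤ ∫ t in y..b, (κ * M) ^ 2 * u t := by
          apply intervalIntegral.integral_mono_ae hb (jost_II hA hu _ _)
            ((huc.intervalIntegrable _ _).const_mul _)
          filter_upwards [hAb] with t ht
          have := hpos t
          rw [mul_pow]
          gcongr
          exact ht.2
        rw [intervalIntegral.integral_const_mul] at this
        nlinarith) (by
        intro b hb
        have h1 := (hc y).1 y b le_rfl hb
        have h2 : 0 ≤ κ * M * u b := by have := hpos b; positivity
        beta_reduce
        linarith)
    rw [div_le_iff₀ hden]
    beta_reduce at key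
    linarith

lemma jost_riccati (hA : ∀ a b, IntervalIntegrable A volume a b) (hκ : 0 < κ)
    (hu : ContDiff ℝ 1 u)
    (he : ∀ a b, deriv u b = deriv u a + ∫ x in a..b, κ ^ 2 * A x * u x)
    (hpos : ∀ y, 0 < u y) (a b : ℝ) :
    -(deriv u b) / (κ * u b) - -(deriv u a) / (κ * u a)
      = ∫ y in a..b, κ * ((-(deriv u y) / (κ * u y)) ^ 2 - A y) := by
  have hdiff : Differentiable ℝ u := hu.differentiable (by norm_num)
  have hac1 : AbsolutelyContinuousOnInterval (deriv u) a b := by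
    have h := (jost_II (κ := κ) hA hu a b).absolutelyContinuousOnInterval_intervalIntegral
      (c := a) (by simp)
    have hcst : AbsolutelyContinuousOnInterval (fun _ : ℝ => deriv u a) a b :=
      (contDiff_const (n := 1)).contDiffOn.absolutelyContinuousOnInterval
    have := hcst.add h
    have hfun : deriv u = ((fun _ : ℝ => deriv u a) +
        fun x => ∫ v in a..x, κ ^ 2 * A v * u v) := by
      funext y
      exact he a y
    rw [hfun]
    exact this
  have hac2 : AbsolutelyContinuousOnInterval (fun y => -(κ * u y)⁻¹) a b := by
    apply ContDiffOn.absolutelyContinuousOnInterval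
    apply ContDiff.contDiffOn
    exact ((contDiff_const.mul hu).inv fun y => (mul_pos hκ (hpos y)).ne').neg
  have hac := hac1.mul hac2
  have hFTC := hac.integral_deriv_eq_sub
  have hw : ∀ y, (deriv u * fun y => -(κ * u y)⁻¹) y = -(deriv u y) / (κ * u y) := by
    intro y
    simp only [Pi.mul_apply]
    ring
  rw [hw, hw] at hFTC
  rw [← hFTC]
  apply intervalIntegral.integral_congr_ae
  filter_upwards [(jost_II (κ := κ) hA hu a b).ae_hasDerivAt_integral] with y hy hyab
  have h1 : HasDerivAt (deriv u) (κ ^ 2 * A y * u y) y := by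
    have := (hy (Set.uIoc_subset_uIcc hyab) a (by simp)).const_add (deriv u a)
    refine this.congr_of_eventuallyEq (Eventually.of_forall fun z => he a z)
  have hne : κ * u y ≠ 0 := (mul_pos hκ (hpos y)).ne'
  have h2 : HasDerivAt (fun y => -(κ * u y)⁻¹) (-(-(κ * deriv u y) / (κ * u y) ^ 2)) y :=
    (((hdiff y).hasDerivAt.const_mul κ).inv hne).neg
  rw [(h1.mul h2).deriv]
  have := (hpos y).ne'
  field_simp
  ring

end Jost

/-- `q r(·, iκ) → Q²` in `L¹(ℝ)` as `κ → ∞`. -/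
theorem qr_tendsto_Qsq (c : ℝ → ℝ) (hmeas : Measurable c)
    (h1 : HypH1 c) (h2 : HypH2 c)
    (U : ℝ → ℝ → ℝ) (hU : ∀ κ : ℝ, 0 < κ → IsJostPlusR c κ (U κ)) :
    Tendsto (fun κ : ℝ => ∫ x : ℝ, |qfun c x * rIK U κ x - (Qfun c x) ^ 2|)
      atTop (𝓝 0) := by
  obtain ⟨c₀, hc₀, cM, hcM, hcb⟩ := h1
  obtain ⟨C, hC, δ, hδ, hdec⟩ := h2
  obtain ⟨m, hm_def⟩ : ∃ m, m = 1 / cM := ⟨_, rfl⟩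
  obtain ⟨M, hM_def⟩ : ∃ M, M = 1 / c₀ := ⟨_, rfl⟩
  have hm : 0 < m := by rw [hm_def]; positivity
  have hM : 0 < M := by rw [hM_def]; positivity
  have hab : ∀ᵐ x : ℝ, m ≤ 1 / c x ∧ 1 / c x ≤ M := by
    filter_upwards [hcb] with x hx
    have hcx : 0 < c x := hc₀.trans hx.1
    rw [hm_def, hM_def]
    exact ⟨one_div_le_one_div_of_le hcx hx.2, one_div_le_one_div_of_le hc₀ hx.1.le⟩
  obtain ⟨A, hA_def⟩ : ∃ A : ℝ → ℝ, A = fun x => (1 / c x) ^ 2 := ⟨_, rfl⟩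
  have hAm : Measurable A := by rw [hA_def]; fun_prop
  have hAb : ∀ᵐ x : ℝ, m ^ 2 ≤ A x ∧ A x ≤ M ^ 2 := by
    filter_upwards [hab] with x hx
    rw [hA_def]
    have : 0 ≤ 1 / c x := hm.le.trans hx.1
    exact ⟨pow_le_pow_left₀ hm.le hx.1 2, pow_le_pow_left₀ this hx.2 2⟩
  have hAloc : LocallyIntegrable A volume := by
    refine (locallyIntegrable_const (M ^ 2)).mono hAm.aestronglyMeasurable ?_
    filter_upwards [hAb] with x hx
    rw [Real.norm_eq_abs, Real.norm_eq_abs, abs_of_nonneg (le_trans (by positivity) hx.1),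
      abs_of_nonneg (by positivity)]
    exact hx.2
  have hA : ∀ a b, IntervalIntegrable A volume a b := fun a b =>
    intervalIntegrable_iff.mpr <|
      (hAloc.integrableOn_isCompact isCompact_uIcc).mono_set Set.uIoc_subset_uIcc
  have hA0 : ∀ᵐ x : ℝ, 0 ≤ A x := by
    filter_upwards [hAb] with x hx
    exact le_trans (by positivity) hx.1
  have he : ∀ κ > 0, ∀ a b, deriv (U κ) b
      = deriv (U κ) a + ∫ x in a..b, κ ^ 2 * A x * U κ x := by
    intro κ hκ a b
    rw [(hU κ hκ).1.2 a b]
    congr 1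
    apply intervalIntegral.integral_congr
    intro x _
    simp only [hA_def]
    ring
  have hu : ∀ κ > 0, ContDiff ℝ 1 (U κ) := fun κ hκ => (hU κ hκ).1.1
  have h0 : ∀ κ > 0, Tendsto (U κ) atTop (𝓝 0) := by
    intro κ hκ
    have h1 := (hU κ hκ).2
    have h2 : Tendsto (fun x : ℝ => Real.exp (-(κ * x))) atTop (𝓝 0) :=
      Real.tendsto_exp_neg_atTop_nhds_zero.comp (tendsto_id.const_mul_atTop hκ)
    have h3 := h2.mul h1
    rw [zero_mul] at h3
    refine h3.congr fun x => ?_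
    rw [← mul_assoc, ← Real.exp_add]
    simp
  have hev : ∀ κ > 0, ∀ᶠ y in atTop, 0 < U κ y := by
    intro κ hκ
    have h1 := (hU κ hκ).2
    filter_upwards [h1.eventually (lt_mem_nhds one_pos)] with y hy
    exact pos_of_mul_pos_right hy (Real.exp_pos _).le
  have hpos : ∀ κ > 0, ∀ y, 0 < U κ y := fun κ hκ =>
    jost_pos hA hA0 (hu κ hκ) (he κ hκ) (h0 κ hκ) (hev κ hκ)
  have hbd : ∀ κ > 0, ∀ y, m ≤ wIK U κ y ∧ wIK U κ y ≤ M := fun κ hκ y =>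
    jost_bounds hA hκ hm hM hAb (hu κ hκ) (he κ hκ) (h0 κ hκ) (hpos κ hκ) y
  have hR : ∀ κ > 0, ∀ a b, wIK U κ b - wIK U κ a
      = ∫ y in a..b, κ * (wIK U κ y ^ 2 - A y) := fun κ hκ a b =>
    jost_riccati hA hκ (hu κ hκ) (he κ hκ) (hpos κ hκ) a b
  have hWc : ∀ κ > 0, Continuous (wIK U κ) := by
    intro κ hκ
    have h1 : Continuous (deriv (U κ)) := (hu κ hκ).continuous_deriv (by norm_num)
    have h2 := (hu κ hκ).continuous
    exact h1.neg.div (continuous_const.mul h2) fun y => (mul_pos hκ (hpos κ hκ y)).ne'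
  have hlim : ∀ᵐ x : ℝ, Tendsto (fun κ => wIK U κ x) atTop (𝓝 (1 / c x)) := by
    filter_upwards [hab, LocallyIntegrable.ae_hasDerivAt_integral hAloc] with x hx hxd
    refine riccati_tendsto hA hm hWc (fun κ hκ y => (hbd κ hκ y).1)
      (fun κ hκ y => (hbd κ hκ y).2) hR hx.1 hx.2 ?_
    have := hxd x
    rw [hA_def] at this ⊢
    exact this
  have hr1 : ∀ κ > 0, ∀ x, |rIK U κ x| ≤ 1 := by
    intro κ hκ x
    have := (hbd κ hκ x).1
    unfold rIK
    rw [abs_div, abs_of_pos (by linarith : 0 < 1 + wIK U κ x), div_le_one (by linarith), abs_le]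
    constructor <;> linarith
  obtain ⟨D, hD⟩ : ∃ D, D = 2 * ((M ^ 2 * (cM + 1)) * C) := ⟨_, rfl⟩
  have hbint : Integrable (fun x : ℝ => D * (1 + x ^ 2) ^ (-(1 + δ) / 2)) volume := by
    have := integrable_rpow_neg_one_add_norm_sq (E := ℝ) (μ := volume) (r := 1 + δ)
      (by simp [hδ])
    simpa [Real.norm_eq_abs, sq_abs] using this.const_mul D
  have hmain : Tendsto (fun κ : ℝ => ∫ x : ℝ, |qfun c x * rIK U κ x - (Qfun c x) ^ 2|)
      atTop (𝓝 (∫ _ : ℝ, (0 : ℝ))) := by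
    refine tendsto_integral_filter_of_dominated_convergence _ ?_ ?_ hbint ?_
    · filter_upwards [eventually_gt_atTop 0] with κ hκ
      have h1 := (hWc κ hκ).measurable
      apply Measurable.aestronglyMeasurable
      unfold qfun Qfun rIK
      fun_prop
    · filter_upwards [eventually_gt_atTop 0] with κ hκ
      filter_upwards [hcb, hdec, hab] with x hx hxd hxa
      have hcx : 0 < c x := hc₀.trans hx.1
      have hinv : 0 < 1 / c x := by positivity
      obtain ⟨d, hd⟩ : ∃ d, d = |c x - 1| := ⟨_, rfl⟩
      have hd0 : 0 ≤ d := by rw [hd]; positivity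
      have hdl : d ≤ cM + 1 := by
        rw [hd, abs_le]; constructor <;> linarith [hx.2]
      have hsq : (1 / c x) ^ 2 ≤ M ^ 2 := by gcongr; exact hxa.2
      have hq : |qfun c x| ≤ M ^ 2 * (cM + 1) * d := by
        have : qfun c x = (1 / c x) ^ 2 * (c x + 1) * (c x - 1) := by
          unfold qfun; field_simp; ring
        rw [this, abs_mul, abs_mul, abs_of_nonneg (sq_nonneg _),
          abs_of_pos (by linarith : 0 < c x + 1), ← hd]
        gcongr
        exact hx.2
      have hQ : (Qfun c x) ^ 2 ≤ M ^ 2 * (cM + 1) * d := by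
        have : (Qfun c x) ^ 2 = (1 / c x) ^ 2 * d * d := by
          rw [mul_assoc, hd, abs_mul_abs_self]
          unfold Qfun; field_simp
        rw [this]
        gcongr
      have h3 : |qfun c x * rIK U κ x| ≤ |qfun c x| := by
        rw [abs_mul]
        exact mul_le_of_le_one_right (abs_nonneg _) (hr1 κ hκ x)
      rw [Real.norm_eq_abs, abs_abs]
      calc |qfun c x * rIK U κ x - Qfun c x ^ 2|
          ≤ |qfun c x * rIK U κ x| + |Qfun c x ^ 2| := abs_sub _ _
        _ ≤ M ^ 2 * (cM + 1) * d + M ^ 2 * (cM + 1) * d := by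
            rw [abs_of_nonneg (sq_nonneg (Qfun c x))]
            linarith
        _ = 2 * (M ^ 2 * (cM + 1)) * d := by ring
        _ ≤ 2 * (M ^ 2 * (cM + 1)) * (C * (1 + x ^ 2) ^ (-(1 + δ) / 2)) := by
            rw [← hd] at hxd
            gcongr
        _ = D * (1 + x ^ 2) ^ (-(1 + δ) / 2) := by rw [hD]; ring
    · filter_upwards [hlim, hcb] with x hx hxc
      have hcx : 0 < c x := hc₀.trans hxc.1
      have hinv : 0 < 1 / c x := by positivity
      have hr : Tendsto (fun κ => rIK U κ x) atTop (𝓝 ((1 - 1 / c x) / (1 + 1 / c x))) :=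
        (tendsto_const_nhds.sub hx).div (tendsto_const_nhds.add hx) (by positivity)
      have h := ((hr.const_mul (qfun c x)).sub_const (Qfun c x ^ 2)).abs
      have hz : |qfun c x * ((1 - 1 / c x) / (1 + 1 / c x)) - Qfun c x ^ 2| = 0 := by
        rw [abs_eq_zero]
        unfold qfun Qfun
        have : c x + 1 ≠ 0 := by positivity
        field_simp
        ring
      rw [hz] at h
      exact h
  simpa using hmain
end
end
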